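/- Let n ≥ 5, p ≥ 1 and 1 < s < (n+4)/(n−4). There exists a constant C > 0, depending only on n, p and s, such that every nonnegative C⁴ solution U = (u_1, …, u_p) of Δ² u_i = |U|^{s−1} u_i on the punctured unit ball B₁ \ {0} ⊂ ℝ^n satisfies |U(x)| ≤ C |x|^{−4/(s−1)} for all 0 < |x| < 1/2. -/

import Mathlib

open MeasureTheory Metric Filter Topology

/-- The Euclidean Laplacian: sum of second partial derivatives. -/
noncomputable def lap {n : ℕ} (u : EuclideanSpace ℝ (Fin n) → ℝ)
    (x : EuclideanSpace ℝ (Fin n)) : ℝ :=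
  ∑ i : Fin n,
    fderiv ℝ (fun y => fderiv ℝ u y (EuclideanSpace.single i 1)) x
      (EuclideanSpace.single i 1)

/-- The bi-Laplacian Δ² = Δ ∘ Δ. -/
noncomputable def bilap {n : ℕ} (u : EuclideanSpace ℝ (Fin n) → ℝ) :
    EuclideanSpace ℝ (Fin n) → ℝ :=
  lap (lap u)

/-- The pointwise Euclidean norm |U(x)| of a p-map U. -/
noncomputable def vnorm {n p : ℕ} (U : Fin p → EuclideanSpace ℝ (Fin n) → ℝ)
    (x : EuclideanSpace ℝ (Fin n)) : ℝ :=
  Real.sqrt (∑ i, U i x ^ 2)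

namespace Bih

/-- Euclidean space of dimension `m + 4`. -/
abbrev E (m : ℕ) := EuclideanSpace ℝ (Fin (m + 4))

/-- The (unnormalised) fundamental solution of the bi-Laplacian in dimension `m + 4`. -/
noncomputable def Phi (m : ℕ) (z : E m) : ℝ := (‖z‖ ^ m)⁻¹

lemma Phi_nonneg {m : ℕ} (z : E m) : 0 ≤ Phi m z := by unfold Phi; positivity

lemma Phi_meas (m : ℕ) : Measurable (Phi m) := by
  unfold Phi; fun_prop

lemma Phi_neg {m : ℕ} (z : E m) : Phi m (-z) = Phi m z := by simp [Phi]

lemma Phi_sub_comm {m : ℕ} (y z : E m) : Phi m (y - z) = Phi m (z - y) := by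
  rw [← Phi_neg, neg_sub]

lemma Phi_dist {m : ℕ} (y z : E m) : Phi m (y - z) = (dist y z ^ m)⁻¹ := by
  rw [Phi, dist_eq_norm]

lemma finrankE (m : ℕ) : Module.finrank ℝ (E m) = m + 4 := by simp [E]

lemma Phi_intOn (m : ℕ) (R : ℝ) : IntegrableOn (Phi m) (ball 0 R) := by
  have h := (integrableOn_fun_norm_addHaar (E := E m) (μ := volume)
    (f := fun y : ℝ => (y ^ m)⁻¹) (r := R)).2 (by
      rw [finrankE]
      have : IntegrableOn (fun y : ℝ => y ^ 3) (Set.Ioo 0 R) :=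
        ((continuous_pow 3).integrableOn_Icc (a := 0) (b := R)).mono_set Set.Ioo_subset_Icc_self
      refine this.congr_fun (fun y hy => ?_) measurableSet_Ioo
      have hy0 : y ≠ 0 := hy.1.ne'
      simp only [smul_eq_mul]
      rw [show m + 4 - 1 = 3 + m by omega, pow_add]
      field_simp)
  exact h

/-- Integral of the kernel over the unit ball. -/
noncomputable def IPhi (m : ℕ) : ℝ := ∫ z in ball (0 : E m) 1, Phi m z

lemma IPhi_nonneg (m : ℕ) : 0 ≤ IPhi m :=
  setIntegral_nonneg measurableSet_ball (fun z _ => Phi_nonneg z)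

lemma Phi_smul {m : ℕ} (R : ℝ) (hR : 0 < R) (z : E m) :
    Phi m (R • z) = (R ^ m)⁻¹ * Phi m z := by
  simp [Phi, norm_smul, abs_of_pos hR, mul_pow, mul_comm]

lemma Phi_int_ball (m : ℕ) (R : ℝ) (hR : 0 < R) :
    ∫ z in ball (0 : E m) R, Phi m z = R ^ 4 * IPhi m := by
  have h := Measure.setIntegral_comp_smul_of_pos (volume : Measure (E m)) (Phi m) (ball 0 1) hR
  rw [finrankE, _root_.smul_ball hR.ne'] at h
  simp only [smul_zero, Real.norm_eq_abs, abs_of_pos hR, mul_one, Phi_smul R hR] at h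
  rw [integral_const_mul] at h
  rw [IPhi]
  simp only [smul_eq_mul] at h
  have hm : R ^ m ≠ 0 := by positivity
  have h4 : R ^ (m+4) ≠ 0 := by positivity
  field_simp at h
  apply mul_left_cancel₀ hm
  rw [← h, pow_add]; ring

lemma Phi_le_of_le {m : ℕ} {z : E m} {r : ℝ} (hr : 0 < r) (h : r ≤ ‖z‖) :
    Phi m z ≤ (r ^ m)⁻¹ := by
  unfold Phi
  gcongr

lemma Phi_le_split {m : ℕ} {r : ℝ} (hr : 0 < r) (z : E m) :
    Phi m z ≤ (ball (0 : E m) r).indicator (Phi m) z + (r ^ m)⁻¹ := by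
  by_cases h : z ∈ ball (0 : E m) r
  · rw [Set.indicator_of_mem h]
    have : 0 < (r ^ m)⁻¹ := by positivity
    linarith
  · rw [Set.indicator_of_notMem h, zero_add]
    exact Phi_le_of_le hr (by simpa using h)

lemma Phi_ind_int (m : ℕ) (r : ℝ) : Integrable ((ball (0 : E m) r).indicator (Phi m)) :=
  (integrable_indicator_iff measurableSet_ball).2 (Phi_intOn m r)

lemma Phi_sub_intOn {m : ℕ} (y : E m) {A : Set (E m)} (hA : volume A ≠ ⊤) :
    IntegrableOn (fun z => Phi m (y - z)) A := by
  have h1 : Integrable (fun z => (ball (0 : E m) 1).indicator (Phi m) (y - z)) :=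
    (Phi_ind_int m 1).comp_sub_left y
  have h2 : IntegrableOn (fun _ : E m => ((1:ℝ) ^ m)⁻¹) A :=
    integrableOn_const hA
  refine Integrable.mono' (h1.integrableOn.add h2) ?_ ?_
  · exact ((Phi_meas m).comp (measurable_const.sub measurable_id)).aestronglyMeasurable
  · refine Eventually.of_forall fun z => ?_
    rw [Real.norm_of_nonneg (Phi_nonneg _)]
    exact Phi_le_split one_pos _

lemma Phi_int_small_aux {m : ℕ} (y : E m) {A : Set (E m)}
    (hA : volume A ≠ ⊤) {r : ℝ} (hr : 0 < r) :
    ∫ z in A, Phi m (y - z) ≤ r ^ 4 * IPhi m + (r ^ m)⁻¹ * (volume A).toReal := by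
  have h1 : Integrable (fun z => (ball (0 : E m) r).indicator (Phi m) (y - z)) :=
    (Phi_ind_int m r).comp_sub_left y
  have h2 : IntegrableOn (fun _ : E m => (r ^ m)⁻¹) A :=
    integrableOn_const hA
  calc ∫ z in A, Phi m (y - z)
      ≤ ∫ z in A, ((ball (0 : E m) r).indicator (Phi m) (y - z) + (r ^ m)⁻¹) :=
        setIntegral_mono (Phi_sub_intOn y hA) (h1.integrableOn.add h2)
          (fun z => Phi_le_split hr _)
    _ = (∫ z in A, (ball (0 : E m) r).indicator (Phi m) (y - z)) + ∫ z in A, (r ^ m)⁻¹ :=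
        integral_add h1.integrableOn h2
    _ ≤ (∫ z, (ball (0 : E m) r).indicator (Phi m) (y - z)) + ∫ z in A, (r ^ m)⁻¹ := by
        refine add_le_add_left (setIntegral_le_integral h1 (Eventually.of_forall fun z => ?_)) _
        exact Set.indicator_nonneg (fun z _ => Phi_nonneg z) _
    _ = r ^ 4 * IPhi m + (r ^ m)⁻¹ * (volume A).toReal := by
        rw [integral_sub_left_eq_self (fun z => (ball (0 : E m) r).indicator (Phi m) z) volume y,
          integral_indicator measurableSet_ball, Phi_int_ball m r hr]
        simp [Measure.real, mul_comm]

lemma Phi_int_small (m : ℕ) (ε : ℝ) (hε : 0 < ε) : ∃ δ > (0:ℝ), ∀ A : Set (E m),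
    volume A ≤ ENNReal.ofReal δ → ∀ y, ∫ z in A, Phi m (y - z) ≤ ε := by
  obtain ⟨r, hr, hr2⟩ : ∃ r > (0:ℝ), r ^ 4 * IPhi m ≤ ε / 2 := by
    have : Tendsto (fun r : ℝ => r ^ 4 * IPhi m) (𝓝[>] 0) (𝓝 (0 ^ 4 * IPhi m)) := by
      apply Tendsto.mono_left _ nhdsWithin_le_nhds
      exact (by fun_prop : Continuous fun r : ℝ => r ^ 4 * IPhi m).tendsto 0
    rw [zero_pow (by norm_num), zero_mul] at this
    have h2 := (this.eventually (ge_mem_nhds (show (0:ℝ) < ε/2 by positivity))).and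
      self_mem_nhdsWithin
    obtain ⟨r, h3, h4⟩ := h2.exists
    exact ⟨r, h4, h3⟩
  refine ⟨ε / 2 * r ^ m, by positivity, fun A hA y => ?_⟩
  have hA' : volume A ≠ ⊤ := ne_top_of_le_ne_top ENNReal.ofReal_ne_top hA
  have h := Phi_int_small_aux y hA' hr
  have h3 : (volume A).toReal ≤ ε / 2 * r ^ m :=
    ENNReal.toReal_le_of_le_ofReal (by positivity) hA
  have h4 : (r ^ m)⁻¹ * (volume A).toReal ≤ (r ^ m)⁻¹ * (ε / 2 * r ^ m) := by gcongr
  have h5 : (r ^ m)⁻¹ * (ε / 2 * r ^ m) = ε / 2 := by field_simp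
  linarith

open EuclideanGeometry

lemma inv_image {m : ℕ} (c : E m) {l : ℝ} (hl : 0 < l) :
    inversion c l '' (ball c l \ {c}) = (closedBall c l)ᶜ := by
  ext y
  constructor
  · rintro ⟨z, ⟨hz, hzc⟩, rfl⟩
    simp only [Set.mem_compl_iff, mem_closedBall, not_le]
    rw [dist_inversion_center]
    have hz0 : 0 < dist z c := dist_pos.2 hzc
    rw [mem_ball] at hz
    rw [lt_div_iff₀ hz0]
    nlinarith
  · intro hy
    simp only [Set.mem_compl_iff, mem_closedBall, not_le] at hy
    have hy0 : 0 < dist y c := hl.trans hy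
    refine ⟨inversion c l y, ⟨?_, ?_⟩, inversion_inversion c hl.ne' y⟩
    · rw [mem_ball, dist_inversion_center, div_lt_iff₀ hy0]
      nlinarith
    · simp only [Set.mem_singleton_iff]
      rw [inversion_eq_center hl.ne']
      exact dist_pos.1 hy0

lemma inv_det {m : ℕ} (c x : E m) (l : ℝ) :
    |((l / dist x c) ^ 2 • ((ℝ ∙ (x - c))ᗮ.reflection : E m →L[ℝ] E m)).det|
      = (l / dist x c) ^ (2 * (m + 4)) := by
  have h : ((l / dist x c) ^ 2 • ((ℝ ∙ (x - c))ᗮ.reflection : E m →L[ℝ] E m)).det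
      = ((l / dist x c) ^ 2) ^ (m+4) * LinearMap.det ((ℝ ∙ (x - c))ᗮ.reflection).toLinearMap := by
    have h2 := LinearMap.det_smul ((l / dist x c) ^ 2)
      ((ℝ ∙ (x - c))ᗮ.reflection).toLinearMap
    rw [finrankE m] at h2
    exact h2
  rw [h, Submodule.det_reflection, abs_mul, abs_pow (-1 : ℝ), abs_neg, abs_one, one_pow, mul_one,
    ← pow_mul, abs_of_nonneg]
  rw [pow_mul]; positivity

lemma inv_cov {m : ℕ} (c : E m) {l : ℝ} (hl : 0 < l) (F : E m → ℝ) :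
    ∫ z in (closedBall c l)ᶜ, F z =
      ∫ z in ball c l \ {c}, (l / dist z c) ^ (2 * (m + 4)) * F (inversion c l z) := by
  have h := integral_image_eq_integral_abs_det_fderiv_smul (volume : Measure (E m))
    (s := ball c l \ {c}) (f := inversion c l)
    (f' := fun x => (l / dist x c) ^ 2 • ((ℝ ∙ (x - c))ᗮ.reflection : E m →L[ℝ] E m))
    (measurableSet_ball.diff (measurableSet_singleton c))
    (fun x hx => (hasFDerivAt_inversion (by simpa using hx.2)).hasFDerivWithinAt)
    ((inversion_injective c hl.ne').injOn) F
  rw [inv_image c hl] at h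
  simpa only [inv_det, smul_eq_mul] using h

lemma inv_cov_int {m : ℕ} (c : E m) {l : ℝ} (hl : 0 < l) (F : E m → ℝ) :
    IntegrableOn F (closedBall c l)ᶜ ↔
      IntegrableOn (fun z => (l / dist z c) ^ (2 * (m + 4)) * F (inversion c l z))
        (ball c l \ {c}) := by
  have h := integrableOn_image_iff_integrableOn_abs_det_fderiv_smul (volume : Measure (E m))
    (s := ball c l \ {c}) (f := inversion c l)
    (f' := fun x => (l / dist x c) ^ 2 • ((ℝ ∙ (x - c))ᗮ.reflection : E m →L[ℝ] E m))
    (measurableSet_ball.diff (measurableSet_singleton c))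
    (fun x hx => (hasFDerivAt_inversion (by simpa using hx.2)).hasFDerivWithinAt)
    ((inversion_injective c hl.ne').injOn) F
  rw [inv_image c hl] at h
  simpa only [inv_det, smul_eq_mul] using h

end Bih

open MeasureTheory Metric Filter Topology
namespace Bih

/-- Euclidean length of a vector `Fin p → ℝ`. -/
noncomputable def len {p : ℕ} (W : Fin p → ℝ) : ℝ := Real.sqrt (∑ i, W i ^ 2)

/-- The nonlinearity. -/
noncomputable def nl {p : ℕ} (s : ℝ) (W : Fin p → ℝ) (i : Fin p) : ℝ := len W ^ (s - 1) * W i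

lemma len_nonneg {p : ℕ} (W : Fin p → ℝ) : 0 ≤ len W := Real.sqrt_nonneg _

lemma le_len {p : ℕ} (W : Fin p → ℝ) (i : Fin p) : W i ≤ len W := by
  refine Real.le_sqrt_of_sq_le ?_
  exact Finset.single_le_sum (f := fun i => W i ^ 2) (fun j _ => sq_nonneg _) (Finset.mem_univ i)

lemma len_mono {p : ℕ} {V W : Fin p → ℝ} (hV : ∀ i, 0 ≤ V i) (h : ∀ i, V i ≤ W i) :
    len V ≤ len W := by
  refine Real.sqrt_le_sqrt (Finset.sum_le_sum fun i _ => ?_)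
  exact pow_le_pow_left₀ (hV i) (h i) 2

lemma len_le_sum {p : ℕ} {W : Fin p → ℝ} (hW : ∀ i, 0 ≤ W i) : len W ≤ ∑ i, W i := by
  rw [len, Real.sqrt_le_left (Finset.sum_nonneg fun i _ => hW i)]
  exact Finset.sum_sq_le_sq_sum_of_nonneg (fun i _ => hW i)

lemma len_smul {p : ℕ} {c : ℝ} (hc : 0 ≤ c) (W : Fin p → ℝ) :
    len (fun i => c * W i) = c * len W := by
  unfold len
  simp only [mul_pow, ← Finset.mul_sum]
  rw [Real.sqrt_mul (sq_nonneg c), Real.sqrt_sq hc]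

lemma len_eq {p : ℕ} (W : Fin p → ℝ) : len W = ‖WithLp.toLp 2 W‖ := by
  simp [len, EuclideanSpace.norm_eq]

lemma len_sub_le {p : ℕ} (V W : Fin p → ℝ) : len W - len V ≤ len (fun i => W i - V i) := by
  rw [len_eq, len_eq, len_eq]
  exact norm_sub_norm_le _ _

lemma nl_nonneg {p : ℕ} {s : ℝ} {W : Fin p → ℝ} {i : Fin p} (h : 0 ≤ W i) : 0 ≤ nl s W i :=
  mul_nonneg (Real.rpow_nonneg (len_nonneg _) _) h

lemma nl_pos {p : ℕ} {s : ℝ} {W : Fin p → ℝ} {i : Fin p} (h : 0 < W i) : 0 < nl s W i :=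
  mul_pos (Real.rpow_pos_of_pos (h.trans_le (le_len _ _)) _) h

lemma nl_mono {p : ℕ} {s : ℝ} (hs : 1 < s) {V W : Fin p → ℝ} (hV : ∀ i, 0 ≤ V i)
    (h : ∀ i, V i ≤ W i) (i : Fin p) : nl s V i ≤ nl s W i := by
  unfold nl
  have := len_mono hV h
  have h2 := len_nonneg V
  have h3 := hV i
  have h4 := h i
  have h5 : 0 ≤ s - 1 := by linarith
  have h6 : 0 ≤ len W ^ (s-1) := Real.rpow_nonneg (len_nonneg _) _
  gcongr

lemma nl_smul {p : ℕ} {s c : ℝ} (hc : 0 < c) (W : Fin p → ℝ) (i : Fin p) :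
    nl s (fun i => c * W i) i = c ^ s * nl s W i := by
  unfold nl
  rw [len_smul hc.le, Real.mul_rpow hc.le (len_nonneg _)]
  have : c ^ s = c ^ (s - 1) * c := by
    conv_rhs => rw [← Real.rpow_one c, ← Real.rpow_mul hc.le, one_mul, ← Real.rpow_add hc]
    ring_nf
  rw [this]; ring

lemma len_cont (p : ℕ) : Continuous (fun W : Fin p → ℝ => len W) := by
  unfold len; fun_prop

lemma nl_cont {p : ℕ} {s : ℝ} (hs : 1 < s) (i : Fin p) :
    Continuous (fun W : Fin p → ℝ => nl s W i) := by
  unfold nl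
  exact ((len_cont p).rpow_const (fun _ => Or.inr (by linarith))).mul (continuous_apply i)

lemma rpow_sub_le {s A B : ℝ} (hs : 1 < s) (hB : 0 ≤ B) (hBA : B ≤ A) :
    A ^ s - B ^ s ≤ s * A ^ (s - 1) * (A - B) := by
  rcases eq_or_lt_of_le (hB.trans hBA) with h | hA
  · have : B = 0 := by linarith
    subst this
    rw [← h]; simp
  · have h1 := one_add_mul_self_le_rpow_one_add (s := B / A - 1) (p := s)
      (by have : 0 ≤ B / A := by positivity
          linarith) hs.le
    rw [add_sub_cancel, Real.div_rpow hB hA.le] at h1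
    have h2 : 0 < A ^ s := Real.rpow_pos_of_pos hA s
    rw [le_div_iff₀ h2] at h1
    have h3 : A ^ s = A ^ (s - 1) * A := by
      rw [Real.rpow_sub_one hA.ne']; field_simp
    have h4 : (1 + s * (B / A - 1)) * A ^ s = A ^ s + s * A ^ (s-1) * (B - A) := by
      rw [h3]; field_simp
    linarith

/-- One-sided Lipschitz estimate. -/
lemma nl_lip {p : ℕ} {s M N : ℝ} (hs : 1 < s) {V W : Fin p → ℝ} (hV : ∀ i, 0 ≤ V i)
    (hW : ∀ i, 0 ≤ W i) (hWM : len W ≤ M) (h : ∀ i, W i - V i ≤ N) (hN : 0 ≤ N) (i : Fin p) :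
    nl s W i - nl s V i ≤ ((1 + s * p) * M ^ (s - 1)) * N := by
  set X : Fin p → ℝ := fun i => min (V i) (W i) with hX
  have hX0 : ∀ i, 0 ≤ X i := fun i => le_min (hV i) (hW i)
  have hXW : ∀ i, X i ≤ W i := fun i => min_le_right _ _
  have h1 : nl s X i ≤ nl s V i := nl_mono hs hX0 (fun i => min_le_left _ _) i
  have hd : ∀ j, W j - X j ≤ N := by
    intro j
    simp only [hX]
    rcases le_total (V j) (W j) with h' | h'
    · rw [min_eq_left h']; exact h j
    · rw [min_eq_right h']; simpa using hN
  have hAB := len_mono hX0 hXW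
  have h2 : len W - len X ≤ p * N := by
    refine (len_sub_le X W).trans ((len_le_sum fun j => sub_nonneg.2 (hXW j)).trans ?_)
    calc ∑ j, (W j - X j) ≤ ∑ j : Fin p, N := Finset.sum_le_sum fun j _ => hd j
      _ = p * N := by simp
  have hA0 := len_nonneg W
  have hB0 := len_nonneg X
  have hM : len W ^ (s-1) ≤ M ^ (s-1) := Real.rpow_le_rpow hA0 hWM (by linarith)
  have hP0 : 0 ≤ len W ^ (s-1) := Real.rpow_nonneg hA0 _
  have hQ : len X ^ (s-1) ≤ len W ^ (s-1) := Real.rpow_le_rpow hB0 hAB (by linarith)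
  have pw : ∀ t : ℝ, 0 ≤ t → t ^ s = t ^ (s-1) * t := by
    intro t ht
    rcases eq_or_lt_of_le ht with h0 | h0
    · rw [← h0, mul_zero, Real.zero_rpow (by linarith)]
    · rw [Real.rpow_sub_one h0.ne']; field_simp
  have h3 := rpow_sub_le hs hB0 hAB
  rw [pw _ hA0, pw _ hB0] at h3
  have hXi : X i ≤ len X := le_len X i
  have hXi0 := hX0 i
  unfold nl at *
  have e1 : len W ^ (s-1) * W i - len X ^ (s-1) * X i =
      len W ^ (s-1) * (W i - X i) + (len W ^ (s-1) - len X ^ (s-1)) * X i := by ring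
  have e2 : (len W ^ (s-1) - len X ^ (s-1)) * X i ≤ (len W ^ (s-1) - len X ^ (s-1)) * len X :=
    mul_le_mul_of_nonneg_left hXi (by linarith)
  have e3 : len W ^ (s-1) * len X ≤ len W ^ (s-1) * len W := by gcongr
  have e4 : len W ^ (s-1) * (W i - X i) ≤ M ^ (s-1) * N :=
    mul_le_mul hM (hd i) (sub_nonneg.2 (hXW i)) (hP0.trans hM)
  have e5 : s * len W ^ (s-1) * (len W - len X) ≤ s * M ^ (s-1) * (p * N) := by
    apply mul_le_mul _ h2 (by linarith) (by have := hP0.trans hM; positivity)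
    gcongr
  nlinarith

end Bih

open MeasureTheory Metric Filter Topology
namespace Bih
open EuclideanGeometry

/-- Bounded continuous nonnegative solutions of the integral system. -/
structure IntSol (m p : ℕ) (s κ M : ℝ) (U : Fin p → E m → ℝ) : Prop where
  cont : ∀ i, Continuous (U i)
  nonneg : ∀ i x, 0 ≤ U i x
  bdd : ∀ x, len (fun j => U j x) ≤ M
  int : ∀ i x, Integrable (fun y => Phi m (x - y) * nl s (fun j => U j y) i)
  eq : ∀ i x, κ * U i x = ∫ y, Phi m (x - y) * nl s (fun j => U j y) i

/-- Kelvin transform. -/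
noncomputable def uK {m p : ℕ} (U : Fin p → E m → ℝ) (c : E m) (l : ℝ) (i : Fin p) (y : E m) : ℝ :=
  (l / dist y c) ^ m * U i (inversion c l y)

/-- Punctured ball. -/
def PB {m : ℕ} (c : E m) (l : ℝ) : Set (E m) := ball c l \ {c}

lemma PB_meas {m : ℕ} (c : E m) (l : ℝ) : MeasurableSet (PB c l) :=
  measurableSet_ball.diff (measurableSet_singleton c)

lemma PB_dist {m : ℕ} {c y : E m} {l : ℝ} (h : y ∈ PB c l) : 0 < dist y c := dist_pos.2 h.2

/-- Moving sphere kernel. -/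
noncomputable def kk {m : ℕ} (c : E m) (l : ℝ) (y z : E m) : ℝ :=
  Phi m (y - z) - (l / dist y c) ^ m * Phi m (inversion c l y - z)

lemma key_dist {m : ℕ} {c y : E m} {l : ℝ} (z : E m) (hy : y ≠ c) :
    dist y c ^ 2 * dist (inversion c l y) z ^ 2 - l ^ 2 * dist y z ^ 2 =
      (l ^ 2 - dist y c ^ 2) * (l ^ 2 - dist z c ^ 2) := by
  have hy0 : 0 < dist y c := dist_pos.2 hy
  set a := y - c with ha
  set b := z - c with hb
  have h1 : dist y c = ‖a‖ := dist_eq_norm _ _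
  have h2 : dist z c = ‖b‖ := dist_eq_norm _ _
  have h3 : dist y z = ‖a - b‖ := by rw [dist_eq_norm, ha, hb]; congr 1; abel
  have h4 : dist (inversion c l y) z = ‖(l / ‖a‖) ^ 2 • a - b‖ := by
    rw [dist_eq_norm, inversion, h1]
    simp only [vsub_eq_sub, vadd_eq_add, ha, hb]
    congr 1; abel
  rw [h1] at hy0
  clear_value a b
  rw [h1, h2, h3, h4, norm_sub_sq_real, norm_sub_sq_real, norm_smul, inner_smul_left]
  simp only [Real.norm_eq_abs, abs_pow, sq_abs, mul_pow, div_pow, abs_div, conj_trivial, abs_norm]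
  field_simp
  ring

lemma PB_inv_dist_pos {m : ℕ} {c y z : E m} {l : ℝ} (hl : 0 < l) (hy : y ∈ PB c l)
    (hz : z ∈ PB c l) : 0 < dist (inversion c l y) z := by
  have hy0 := PB_dist hy
  have hyl : dist y c < l := hy.1
  have hzl : dist z c < l := hz.1
  rw [dist_pos]
  rintro h
  have : dist (inversion c l y) c = l ^ 2 / dist y c := dist_inversion_center c y l
  rw [h] at this
  rw [this, div_lt_iff₀ hy0] at hzl
  nlinarith

lemma kk_pos {m : ℕ} (hm : 1 ≤ m) {c y z : E m} {l : ℝ} (hl : 0 < l) (hy : y ∈ PB c l)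
    (hz : z ∈ PB c l) (hyz : y ≠ z) : 0 < kk c l y z := by
  have hy0 := PB_dist hy
  have hyl : dist y c < l := hy.1
  have hzl : dist z c < l := hz.1
  have hyz0 : 0 < dist y z := dist_pos.2 hyz
  have hz0 := PB_dist hz
  have h1 := key_dist (l := l) z hy.2
  have hd0 := PB_inv_dist_pos hl hy hz
  have h2 : 0 < (l ^ 2 - dist y c ^ 2) * (l ^ 2 - dist z c ^ 2) := by
    apply mul_pos <;> nlinarith
  have h3 : l * dist y z < dist y c * dist (inversion c l y) z := by
    apply lt_of_pow_lt_pow_left₀ 2 (by positivity)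
    rw [mul_pow, mul_pow]; linarith
  have h4 : (l / dist y c) * (dist (inversion c l y) z)⁻¹ < (dist y z)⁻¹ := by
    rw [div_mul_eq_mul_div, div_lt_iff₀ hy0, ← div_eq_mul_inv, div_lt_iff₀ hd0,
      mul_assoc, ← div_eq_inv_mul, lt_div_iff₀ hyz0]
    linarith
  unfold kk
  rw [Phi_dist, Phi_dist, ← inv_pow, ← inv_pow, ← mul_pow, sub_pos]
  exact pow_lt_pow_left₀ h4 (by positivity) (by omega)

lemma kk_le {m : ℕ} {c y z : E m} {l : ℝ} (hl : 0 < l) :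
    kk c l y z ≤ Phi m (y - z) := by
  unfold kk
  have := Phi_nonneg (inversion c l y - z)
  have : 0 ≤ (l / dist y c) ^ m * Phi m (inversion c l y - z) := by positivity
  linarith

lemma PB_ae {m : ℕ} (c : E m) (l : ℝ) :
    (PB c l : Set (E m)) =ᵐ[volume] closedBall c l := by
  refine LE.le.eventuallyLE (show PB c l ≤ closedBall c l from fun z hz => ball_subset_closedBall hz.1) |>.antisymm ?_
  rw [ae_le_set]
  have hsub : closedBall c l \ PB c l ⊆ sphere c l ∪ {c} := by
    intro z hz
    by_cases hzc : z = c
    · right; exact hzc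
    · left
      have h1 : dist z c ≤ l := hz.1
      have h2 : ¬ dist z c < l := fun h => hz.2 ⟨h, hzc⟩
      exact le_antisymm h1 (not_lt.1 h2)
  refine measure_mono_null hsub ?_
  rw [measure_union_null_iff]
  exact ⟨Measure.addHaar_sphere _ _ _, by simp⟩

lemma split_int {m : ℕ} (c : E m) {l : ℝ} (hl : 0 < l) {F : E m → ℝ}
    (hF : Integrable F) :
    ∫ z, F z = (∫ z in PB c l, F z) +
      ∫ z in PB c l, (l / dist z c) ^ (2 * (m + 4)) * F (inversion c l z) := by
  rw [setIntegral_congr_set (PB_ae c l)]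
  have := inv_cov c hl F
  unfold PB
  rw [← this, integral_add_compl measurableSet_closedBall hF]

lemma split_int' {m : ℕ} (c : E m) {l : ℝ} (hl : 0 < l) {F : E m → ℝ}
    (hF : Integrable F) :
    IntegrableOn (fun z => (l / dist z c) ^ (2 * (m + 4)) * F (inversion c l z)) (PB c l) :=
  (inv_cov_int c hl F).1 hF.integrableOn

lemma phi_inv1 {m : ℕ} {c y z : E m} {l : ℝ} (hl : 0 < l) (hy : y ∈ PB c l) (hz : z ∈ PB c l) :
    (l / dist z c) ^ (2 * (m + 4)) * Phi m (y - inversion c l z) =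
      (l / dist y c) ^ m * Phi m (inversion c l y - z) * (l / dist z c) ^ (m + 8) := by
  have hy0 := PB_dist hy
  have hz0 := PB_dist hz
  have h1 := dist_inversion_mul_dist_center_eq (R := l) hy.2 hz.2
  have hd0 := PB_inv_dist_pos hl hy hz
  have hd1 : 0 < dist y (inversion c l z) := by
    rw [dist_comm]; exact PB_inv_dist_pos hl hz hy
  have h2 : dist y (inversion c l z) = dist (inversion c l y) z * dist y c / dist z c := by
    rw [eq_div_iff hz0.ne', h1]
  rw [Phi_dist, Phi_dist, h2]
  simp only [div_pow, mul_pow]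
  have e : 2 * (m + 4) = (m + 8) + m := by ring
  rw [e, pow_add (dist z c), pow_add l]
  field_simp

lemma phi_inv2 {m : ℕ} (hm : 1 ≤ m) {c y z : E m} {l : ℝ} (hl : 0 < l) (hy : y ∈ PB c l)
    (hz : z ∈ PB c l) :
    (l / dist y c) ^ m * ((l / dist z c) ^ (2 * (m + 4)) *
      Phi m (inversion c l y - inversion c l z)) =
      Phi m (y - z) * (l / dist z c) ^ (m + 8) := by
  have hy0 := PB_dist hy
  have hz0 := PB_dist hz
  have h2 := dist_inversion_inversion hy.2 hz.2 l
  by_cases hyz : y = z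
  · subst hyz
    simp [Phi, show m ≠ 0 by omega]
  have hd : 0 < dist y z := dist_pos.2 hyz
  rw [Phi_dist, Phi_dist, h2]
  simp only [div_pow, mul_pow]
  have e : 2 * (m + 4) = (m + 8) + m := by ring
  rw [e, pow_add (dist z c), pow_add l]
  field_simp
  ring

variable {m p : ℕ} {s κ M : ℝ} {U : Fin p → E m → ℝ}

/-- Nonlinear term. -/
noncomputable def ff (s : ℝ) (U : Fin p → E m → ℝ) (i : Fin p) (z : E m) : ℝ :=
  nl s (fun j => U j z) i

/-- Kelvin-transformed nonlinear term. -/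
noncomputable def gg (s : ℝ) (U : Fin p → E m → ℝ) (c : E m) (l : ℝ) (i : Fin p) (z : E m) : ℝ :=
  (l / dist z c) ^ (m + 8) * ff s U i (inversion c l z)

lemma diff_formula (hm : 1 ≤ m) (h : IntSol m p s κ M U) (i : Fin p) {c y : E m} {l : ℝ}
    (hl : 0 < l) (hy : y ∈ PB c l) :
    IntegrableOn (fun z => kk c l y z * (ff s U i z - gg s U c l i z)) (PB c l) ∧
    κ * (U i y - uK U c l i y) =
      ∫ z in PB c l, kk c l y z * (ff s U i z - gg s U c l i z) := by
  have hI1 := h.int i y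
  have hI2 := h.int i (inversion c l y)
  have e1 := split_int c hl hI1
  have e2 := split_int c hl hI2
  have J1 := split_int' c hl hI1
  have J2 := split_int' c hl hI2
  rw [← h.eq] at e1 e2
  have A1 : IntegrableOn (fun z => Phi m (y - z) * ff s U i z) (PB c l) := hI1.integrableOn
  have A2 : IntegrableOn (fun z => Phi m (inversion c l y - z) * ff s U i z) (PB c l) :=
    hI2.integrableOn
  have q1 : ∀ z ∈ PB c l, (l / dist z c) ^ (2 * (m + 4)) *
      (Phi m (y - inversion c l z) * nl s (fun j => U j (inversion c l z)) i) =
      (l / dist y c) ^ m * Phi m (inversion c l y - z) * gg s U c l i z := by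
    intro z hz
    rw [← mul_assoc, phi_inv1 hl hy hz]
    unfold gg ff; ring
  have q2 : ∀ z ∈ PB c l, (l / dist y c) ^ m * ((l / dist z c) ^ (2 * (m + 4)) *
      (Phi m (inversion c l y - inversion c l z) * nl s (fun j => U j (inversion c l z)) i)) =
      Phi m (y - z) * gg s U c l i z := by
    intro z hz
    have := phi_inv2 hm hl hy hz
    unfold gg ff
    rw [← mul_assoc (Phi m (y - z)), ← this]
    ring
  have B1 := J1.congr_fun q1 (PB_meas c l)
  have B2 : IntegrableOn _ _ volume := (J2.const_mul ((l / dist y c) ^ m))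
  have B3 := B2.congr_fun q2 (PB_meas c l)
  rw [setIntegral_congr_fun (PB_meas c l) q1] at e1
  have e3 : κ * uK U c l i y = (∫ z in PB c l, (l / dist y c) ^ m *
      (Phi m (inversion c l y - z) * ff s U i z)) +
      ∫ z in PB c l, Phi m (y - z) * gg s U c l i z := by
    rw [← setIntegral_congr_fun (PB_meas c l) q2, integral_const_mul, integral_const_mul,
      ← mul_add]
    unfold uK
    rw [mul_left_comm, e2]
    rfl
  have C1 : IntegrableOn (fun z => (l / dist y c) ^ m *
      (Phi m (inversion c l y - z) * ff s U i z)) (PB c l) := A2.const_mul _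
  have key : (fun z => kk c l y z * (ff s U i z - gg s U c l i z)) = fun z =>
      (Phi m (y - z) * ff s U i z + (l / dist y c) ^ m * Phi m (inversion c l y - z) *
        gg s U c l i z) - ((l / dist y c) ^ m *
      (Phi m (inversion c l y - z) * ff s U i z) + Phi m (y - z) * gg s U c l i z) := by
    funext z; unfold kk; ring
  rw [key]
  refine ⟨(A1.add B1).sub (C1.add B3), ?_⟩
  have t := integral_sub (A1.add B1) (C1.add B3)
  rw [integral_add' A1 B1, integral_add' C1 B3] at t
  rw [mul_sub, e3, e1]
  exact t.symm

end Bih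

open MeasureTheory Metric Filter Topology
namespace Bih
open EuclideanGeometry
variable {m p : ℕ} {s κ M : ℝ} {U : Fin p → E m → ℝ}

lemma uK_nonneg (h : IntSol m p s κ M U) (c : E m) {l : ℝ} (hl : 0 < l) (i : Fin p) (y : E m) :
    0 ≤ uK U c l i y := by
  have := h.nonneg i (inversion c l y)
  unfold uK; positivity

lemma gg_ge (hs2 : s * m < m + 8) (h : IntSol m p s κ M U) {c z : E m} {l : ℝ} (hl : 0 < l)
    (hz : z ∈ PB c l) (i : Fin p) :
    nl s (fun j => uK U c l j z) i ≤ gg s U c l i z := by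
  have hz0 := PB_dist hz
  have hzl : dist z c < l := hz.1
  have hr : 1 < l / dist z c := by rwa [one_lt_div hz0]
  unfold uK gg ff
  rw [nl_smul (by positivity)]
  refine mul_le_mul_of_nonneg_right ?_ (nl_nonneg (h.nonneg i _))
  rw [← Real.rpow_natCast, ← Real.rpow_natCast, ← Real.rpow_mul (by positivity)]
  apply Real.rpow_le_rpow_of_exponent_le hr.le
  push_cast; nlinarith

lemma gg_gt (hs2 : s * m < m + 8) {c z : E m} {l : ℝ} (hl : 0 < l)
    (hz : z ∈ PB c l) (i : Fin p) (hpos : ∀ x, 0 < U i x) :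
    nl s (fun j => uK U c l j z) i < gg s U c l i z := by
  have hz0 := PB_dist hz
  have hzl : dist z c < l := hz.1
  have hr : 1 < l / dist z c := by rwa [one_lt_div hz0]
  unfold uK gg ff
  rw [nl_smul (by positivity)]
  refine mul_lt_mul_of_pos_right ?_ (nl_pos (hpos _))
  rw [← Real.rpow_natCast, ← Real.rpow_natCast, ← Real.rpow_mul (by positivity)]
  apply Real.rpow_lt_rpow_of_exponent_lt hr
  push_cast; nlinarith

/-- Set where the comparison fails. -/
def bad (U : Fin p → E m → ℝ) (c : E m) (l : ℝ) : Set (E m) :=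
  {z | z ∈ PB c l ∧ ∃ j, uK U c l j z < U j z}

/-- The comparison on the punctured ball. -/
def good (U : Fin p → E m → ℝ) (c : E m) (l : ℝ) : Prop :=
  ∀ i, ∀ y ∈ PB c l, U i y ≤ uK U c l i y

lemma uK_meas (h : IntSol m p s κ M U) (c : E m) (l : ℝ) (i : Fin p) :
    Measurable (uK U c l i) := by
  have h1 : Measurable (inversion c l : E m → E m) := by
    unfold inversion
    simp only [vsub_eq_sub, vadd_eq_add]
    fun_prop
  unfold uK
  exact Measurable.mul (by fun_prop) ((h.cont i).measurable.comp h1)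

lemma bad_meas (h : IntSol m p s κ M U) (c : E m) (l : ℝ) : MeasurableSet (bad U c l) := by
  have : bad U c l = PB c l ∩ ⋃ j, {z | uK U c l j z < U j z} := by
    ext z; simp [bad]
  rw [this]
  exact (PB_meas c l).inter (MeasurableSet.iUnion fun j =>
    measurableSet_lt (uK_meas h c l j) (h.cont j).measurable)

lemma halving (hm : 1 ≤ m) (hs : 1 < s) (hs2 : s * m < m + 8) (hκ : 0 < κ)
    (h : IntSol m p s κ M U) {c : E m} {l : ℝ} (hl : 0 < l)
    (hsmall : ∀ y, ∫ z in bad U c l, Phi m (y - z) ≤ κ / (2 * ((1 + s * p) * M ^ (s - 1) + 1)))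
    {N : ℝ} (hN : 0 ≤ N) (hb : ∀ i, ∀ y ∈ PB c l, U i y - uK U c l i y ≤ N) :
    ∀ i, ∀ y ∈ PB c l, U i y - uK U c l i y ≤ N / 2 := by
  intro i y hy
  obtain ⟨I1, e1⟩ := diff_formula hm h i hl hy
  set L := (1 + s * p) * M ^ (s - 1) with hL
  have hM0 : 0 ≤ M := (len_nonneg _).trans (h.bdd 0)
  have hL0 : 0 ≤ L := by positivity
  have hfin : volume (bad U c l) ≠ ⊤ := by
    refine ne_top_of_le_ne_top (measure_ball_lt_top (x := c) (r := l)).ne (measure_mono ?_)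
    exact fun z hz => hz.1.1
  have I2 : IntegrableOn (fun z => Phi m (y - z) * (L * N)) (bad U c l) :=
    (Phi_sub_intOn y hfin).mul_const _
  have hle : ∫ z in PB c l, kk c l y z * (ff s U i z - gg s U c l i z) ≤
      ∫ z in PB c l, (bad U c l).indicator (fun z => Phi m (y - z) * (L * N)) z := by
    refine setIntegral_mono_on_ae I1 ?_ (PB_meas c l) ?_
    · exact ((integrable_indicator_iff (bad_meas h c l)).2 I2).integrableOn
    · have : ∀ᵐ z : E m, z ≠ y := by
        simp [ae_iff]
      filter_upwards [this] with z hzy hz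
      have hk := (kk_pos hm hl hy hz hzy.symm).le
      have hg := gg_ge hs2 h hl hz i
      by_cases hzb : z ∈ bad U c l
      · rw [Set.indicator_of_mem hzb]
        have h1 : ff s U i z - gg s U c l i z ≤ L * N := by
          have := nl_lip (M := M) (N := N) hs (V := fun j => uK U c l j z) (W := fun j => U j z)
            (fun j => uK_nonneg h c hl j z)
            (fun j => h.nonneg j z) (h.bdd z) (fun j => hb j z hz) hN i
          unfold ff
          linarith
        calc _ ≤ kk c l y z * (L * N) := mul_le_mul_of_nonneg_left h1 hk
          _ ≤ _ := mul_le_mul_of_nonneg_right (kk_le hl) (by positivity)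
      · rw [Set.indicator_of_notMem hzb]
        have h2 : ∀ j, U j z ≤ uK U c l j z := by
          intro j
          by_contra hcon
          exact hzb ⟨hz, j, not_le.1 hcon⟩
        have h3 := nl_mono hs (fun j => h.nonneg j z) h2 i
        apply mul_nonpos_of_nonneg_of_nonpos hk
        unfold ff; linarith
  rw [setIntegral_indicator (bad_meas h c l),
    Set.inter_eq_right.2 (fun z hz => hz.1), integral_mul_const] at hle
  have h5 := hsmall y
  have h6 : (∫ z in bad U c l, Phi m (y - z)) * (L * N) ≤ κ / (2 * (L + 1)) * (L * N) :=
    mul_le_mul_of_nonneg_right h5 (by positivity)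
  have h7 : κ / (2 * (L + 1)) * (L * N) ≤ κ * (N / 2) := by
    have : κ * (N / 2) = κ / (2 * (L + 1)) * ((L + 1) * N) := by field_simp
    rw [this]
    gcongr; linarith
  have h8 : κ * (U i y - uK U c l i y) ≤ κ * (N / 2) := by rw [e1]; linarith
  exact le_of_mul_le_mul_left h8 hκ

lemma good_of_small (hm : 1 ≤ m) (hs : 1 < s) (hs2 : s * m < m + 8) (hκ : 0 < κ)
    (h : IntSol m p s κ M U) : ∃ δ > (0:ℝ), ∀ (c : E m) (l : ℝ), 0 < l →
      volume (bad U c l) ≤ ENNReal.ofReal δ → good U c l := by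
  have hM0 : 0 ≤ M := (len_nonneg _).trans (h.bdd 0)
  have hL0 : 0 ≤ (1 + s * p) * M ^ (s - 1) := by positivity
  obtain ⟨δ, hδ, hh⟩ := Phi_int_small m (κ / (2 * ((1 + s * p) * M ^ (s - 1) + 1))) (by positivity)
  refine ⟨δ, hδ, fun c l hl hv => ?_⟩
  have key : ∀ k : ℕ, ∀ i, ∀ y ∈ PB c l, U i y - uK U c l i y ≤ M * (1/2) ^ k := by
    intro k
    induction k with
    | zero =>
      intro i y _
      have h1 := (le_len (fun j => U j y) i).trans (h.bdd y)
      have h2 := uK_nonneg h c hl i y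
      rw [pow_zero, mul_one]; linarith
    | succ k ih =>
      have := halving hm hs hs2 hκ h hl (hh _ hv) (N := M * (1/2)^k) (by positivity) ih
      intro i y hy
      have := this i y hy
      rw [pow_succ]; linarith
  intro i y hy
  have lim : Tendsto (fun k : ℕ => M * (1/2 : ℝ) ^ k) atTop (𝓝 (M * 0)) :=
    (tendsto_pow_atTop_nhds_zero_of_lt_one (by norm_num) (by norm_num)).const_mul M
  have := ge_of_tendsto' lim (fun k => key k i y hy)
  linarith

lemma pos_or_zero (hκ : 0 < κ) (h : IntSol m p s κ M U) (i : Fin p) :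
    (∀ x, 0 < U i x) ∨ ∀ x, U i x = 0 := by
  by_cases hex : ∃ x, U i x = 0
  · right
    obtain ⟨x, hx⟩ := hex
    have e := h.eq i x
    rw [hx, mul_zero] at e
    have e2 := (integral_eq_zero_iff_of_nonneg
      (fun y => mul_nonneg (Phi_nonneg _) (nl_nonneg (h.nonneg i y))) (h.int i x)).1 e.symm
    intro x'
    have e3 : ∫ y, Phi m (x' - y) * nl s (fun j => U j y) i = 0 := by
      apply integral_eq_zero_of_ae
      have : ∀ᵐ z : E m, z ≠ x := by simp [ae_iff]
      filter_upwards [e2, this] with y hy hyx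
      simp only [Pi.zero_apply] at hy ⊢
      have hP : Phi m (x - y) ≠ 0 := by
        have : 0 < dist x y := dist_pos.2 hyx.symm
        rw [Phi_dist]; positivity
      rcases mul_eq_zero.1 hy with h0 | h0
      · exact absurd h0 hP
      · rw [h0, mul_zero]
    rw [← h.eq] at e3
    exact (mul_eq_zero.1 e3).resolve_left hκ.ne'
  · left
    intro x
    exact lt_of_le_of_ne (h.nonneg i x) (fun h0 => hex ⟨x, h0.symm⟩)

lemma strict (hm : 1 ≤ m) (hs : 1 < s) (hs2 : s * m < m + 8) (hκ : 0 < κ)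
    (h : IntSol m p s κ M U) {c : E m} {l : ℝ} (hl : 0 < l) (hg : good U c l) (i : Fin p)
    (hpos : ∀ x, 0 < U i x) {y : E m} (hy : y ∈ PB c l) : U i y < uK U c l i y := by
  obtain ⟨I1, e1⟩ := diff_formula hm h i hl hy
  have hneg : ∀ z ∈ PB c l, z ≠ y → kk c l y z * (ff s U i z - gg s U c l i z) < 0 := by
    intro z hz hzy
    have hk := kk_pos hm hl hy hz hzy.symm
    apply mul_neg_of_pos_of_neg hk
    have h1 := gg_gt hs2 hl hz i hpos
    have h2 := nl_mono hs (fun j => h.nonneg j z) (fun j => hg j z hz) i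
    unfold ff; linarith
  have hae : ∀ᵐ z : E m, z ≠ y := by simp [ae_iff]
  have h3 : 0 < ∫ z in PB c l, -(kk c l y z * (ff s U i z - gg s U c l i z)) := by
    have I1n : IntegrableOn (fun z => -(kk c l y z * (ff s U i z - gg s U c l i z))) (PB c l) :=
      I1.neg
    rw [setIntegral_pos_iff_support_of_nonneg_ae _ I1n]
    · have hsub : PB c l \ {y} ⊆
          (Function.support fun z => -(kk c l y z * (ff s U i z - gg s U c l i z))) ∩ PB c l := by
        intro z hz
        refine ⟨?_, hz.1⟩
        simp only [Function.mem_support, ne_eq, neg_eq_zero]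
        exact (hneg z hz.1 hz.2).ne
      refine lt_of_lt_of_le ?_ (measure_mono hsub)
      have : volume (PB c l \ {y}) = volume (ball c l) := by
        unfold PB
        rw [measure_diff_null (by simp), measure_diff_null (by simp)]
      rw [this]
      exact measure_ball_pos _ _ hl
    · filter_upwards [ae_restrict_mem (PB_meas c l), ae_restrict_of_ae hae] with z hz hzy
      have := hneg z hz hzy
      simp only [Pi.zero_apply]; linarith
  rw [integral_neg, ← e1] at h3
  have : κ * (U i y - uK U c l i y) < κ * 0 := by linarith
  have := lt_of_mul_lt_mul_left this hκ.le
  linarith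

lemma uK_cont_l (h : IntSol m p s κ M U) (c : E m) (i : Fin p) (y : E m) :
    Continuous (fun l : ℝ => uK U c l i y) := by
  unfold uK
  refine Continuous.mul (by fun_prop) ((h.cont i).comp ?_)
  unfold inversion
  simp only [vsub_eq_sub, vadd_eq_add]
  fun_prop

end Bih

open MeasureTheory Metric Filter Topology
namespace Bih
open EuclideanGeometry
variable {m p : ℕ} {s κ M : ℝ} {U : Fin p → E m → ℝ}

lemma bad_vol_tendsto (hm : 1 ≤ m) (hs : 1 < s) (hs2 : s * m < m + 8) (hκ : 0 < κ)
    (h : IntSol m p s κ M U) {c : E m} {l : ℝ} (hl : 0 < l) (hg : good U c l) :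
    Tendsto (fun t => volume (bad U c t)) (𝓝 l) (𝓝 0) := by
  have e : ∀ t, volume (bad U c t) = ∫⁻ z, (bad U c t).indicator 1 z := fun t => by
    rw [lintegral_indicator_one (bad_meas h c t)]
  simp_rw [e]
  have e0 : (0 : ENNReal) = ∫⁻ _ : E m, 0 := by simp
  rw [e0]
  refine tendsto_lintegral_filter_of_dominated_convergence ((ball c (l + 1)).indicator 1) ?_ ?_ ?_ ?_
  · exact Eventually.of_forall fun t => (measurable_one.indicator (bad_meas h c t))
  · filter_upwards [gt_mem_nhds (show l < l + 1 by linarith)] with t ht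
    refine Eventually.of_forall fun z => ?_
    refine Set.indicator_le_indicator_of_subset ?_ (fun _ => zero_le) z
    intro w hw
    exact ball_subset_ball ht.le hw.1.1
  · rw [lintegral_indicator_one measurableSet_ball]
    exact measure_ball_lt_top.ne
  · have h1 : ∀ᵐ z : E m, z ≠ c := by simp [ae_iff]
    have h2 : ∀ᵐ z : E m, z ∉ sphere c l := by
      exact measure_eq_zero_iff_ae_notMem.1 (Measure.addHaar_sphere volume c l)
    filter_upwards [h1, h2] with z hzc hzl
    apply tendsto_const_nhds.congr'
    have hzl' : dist z c ≠ l := fun h => hzl h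
    rcases lt_or_gt_of_ne hzl' with hlt | hgt
    · have hz : z ∈ PB c l := ⟨hlt, hzc⟩
      have : ∀ᶠ t in 𝓝 l, ∀ j, U j z ≤ uK U c t j z := by
        rw [eventually_all]
        intro j
        rcases pos_or_zero hκ h j with hp | hp
        · have := strict hm hs hs2 hκ h hl hg j hp hz
          filter_upwards [((uK_cont_l h c j z).tendsto l).eventually (lt_mem_nhds this)] with t ht
          exact ht.le
        · filter_upwards [lt_mem_nhds hl] with t ht
          rw [hp z]; exact uK_nonneg h c ht j z
      filter_upwards [this] with t ht
      rw [Set.indicator_of_notMem]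
      rintro ⟨-, j, hj⟩
      exact absurd (ht j) (not_le.2 hj)
    · filter_upwards [gt_mem_nhds hgt] with t ht
      rw [Set.indicator_of_notMem]
      rintro ⟨hz, -⟩
      have : dist z c < t := hz.1
      linarith

lemma good_all (hm : 1 ≤ m) (hs : 1 < s) (hs2 : s * m < m + 8) (hκ : 0 < κ)
    (h : IntSol m p s κ M U) (c : E m) {l : ℝ} (hl : 0 < l) : good U c l := by
  obtain ⟨δ, hδ, hsm⟩ := good_of_small hm hs hs2 hκ h
  have hδ' : (0 : ENNReal) < ENNReal.ofReal δ := by simpa using hδ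
  let S : Set (Set.Ioi (0:ℝ)) := {t | good U c t.1}
  have hopen : IsOpen S := by
    rw [isOpen_iff_mem_nhds]
    rintro ⟨t, ht⟩ hg
    have := (bad_vol_tendsto hm hs hs2 hκ h ht hg).eventually (ge_mem_nhds hδ')
    have h2 := (continuous_subtype_val.tendsto (⟨t, ht⟩ : Set.Ioi (0:ℝ))).eventually this
    filter_upwards [h2] with r hr
    exact hsm c r.1 r.2 hr
  have hclosed : IsClosed S := by
    rw [← isOpen_compl_iff, isOpen_iff_mem_nhds]
    rintro ⟨t, ht⟩ hg
    have hg' : ¬ good U c t := hg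
    unfold good at hg'
    push Not at hg'
    obtain ⟨i, y, hy, hlt⟩ := hg'
    have e1 : ∀ᶠ r in 𝓝 t, uK U c r i y < U i y :=
      ((uK_cont_l h c i y).tendsto t).eventually (gt_mem_nhds hlt)
    have e2 : ∀ᶠ r in 𝓝 t, dist y c < r := lt_mem_nhds hy.1
    have h2 := (continuous_subtype_val.tendsto (⟨t, ht⟩ : Set.Ioi (0:ℝ))).eventually (e1.and e2)
    filter_upwards [h2] with r hr
    intro hgr
    exact absurd (hgr i y ⟨hr.2, hy.2⟩) (not_le.2 hr.1)
  have hne : S.Nonempty := by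
    have hv : Tendsto (fun t : ℝ => volume (ball c t)) (𝓝[>] 0) (𝓝 0) := by
      have e : (fun t : ℝ => volume (ball c t)) = fun t : ℝ =>
          volume (ball c t) := rfl
      have : ∀ t ∈ Set.Ioi (0:ℝ), ENNReal.ofReal (t ^ (m+4)) * volume (ball (0:E m) 1) =
          volume (ball c t) := by
        intro t ht
        rw [Measure.addHaar_ball volume c (le_of_lt ht), finrankE]
      refine Tendsto.congr' (eventually_nhdsWithin_of_forall this) ?_
      have h0 : Tendsto (fun t : ℝ => ENNReal.ofReal (t ^ (m+4)) * volume (ball (0:E m) 1))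
          (𝓝[>] 0) (𝓝 (ENNReal.ofReal (0 ^ (m+4)) * volume (ball (0:E m) 1))) := by
        apply ENNReal.Tendsto.mul_const _ (Or.inr measure_ball_lt_top.ne)
        apply Tendsto.mono_left _ nhdsWithin_le_nhds
        exact (ENNReal.continuous_ofReal.comp (continuous_pow (m+4))).tendsto 0
      simpa using h0
    obtain ⟨t, ht1, ht2⟩ := ((hv.eventually (ge_mem_nhds hδ')).and self_mem_nhdsWithin).exists
    refine ⟨⟨t, ht2⟩, hsm c t ht2 ((measure_mono ?_).trans ht1)⟩
    exact fun z hz => hz.1.1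
  haveI : PreconnectedSpace (Set.Ioi (0:ℝ)) :=
    isPreconnected_iff_preconnectedSpace.1 isPreconnected_Ioi
  have huniv : S = Set.univ := IsClopen.eq_univ ⟨hclosed, hopen⟩ hne
  have : (⟨l, hl⟩ : Set.Ioi (0:ℝ)) ∈ S := by rw [huniv]; trivial
  exact this

lemma const_of_good (hall : ∀ (c : E m) (l : ℝ), 0 < l → good U c l)
    (i : Fin p) (a b : E m) : U i a ≤ U i b := by
  by_cases hab : a = b
  · rw [hab]
  set d := dist a b with hd
  have hd0 : 0 < d := dist_pos.2 hab
  have key : ∀ T : ℝ, 0 < T → U i a ≤ (Real.sqrt ((T + 1) / T)) ^ m * U i b := by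
    intro T hT
    set c := a + T • (a - b) with hc
    set l := Real.sqrt ((T + 1) / T) * (T * d) with hl
    have hl0 : 0 < l := by positivity
    have hac : dist a c = T * d := by
      rw [hc, dist_self_add_right, norm_smul, ← dist_eq_norm, Real.norm_eq_abs, abs_of_pos hT]
    have h1 : 1 < Real.sqrt ((T + 1) / T) := by
      rw [Real.lt_sqrt (by norm_num), one_pow, one_lt_div hT]; linarith
    have hmem : a ∈ PB c l := by
      have hTd : 0 < T * d := by positivity
      refine ⟨?_, ?_⟩
      · rw [mem_ball, hac, hl]; nlinarith
      · intro h0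
        have : a = c := h0
        rw [← this, dist_self] at hac
        linarith
    have hinv : inversion c l a = b := by
      unfold inversion
      rw [hac, hl]
      have : (Real.sqrt ((T + 1) / T) * (T * d) / (T * d)) ^ 2 = (T + 1) / T := by
        rw [mul_div_assoc, div_self (by positivity), mul_one, Real.sq_sqrt (by positivity)]
      rw [this]
      simp only [vsub_eq_sub, vadd_eq_add, hc]
      have e : a - (a + T • (a - b)) = T • (b - a) := by
        rw [smul_sub, smul_sub]; abel
      rw [e, smul_smul, div_mul_cancel₀ _ hT.ne']
      module
    have := hall c l hl0 i a hmem
    unfold uK at this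
    rw [hinv, hac, hl, mul_div_assoc, div_self (by positivity), mul_one] at this
    exact this
  have lim : Tendsto (fun T : ℝ => (Real.sqrt ((T + 1) / T)) ^ m * U i b) atTop
      (𝓝 ((Real.sqrt 1) ^ m * U i b)) := by
    have h1 : Tendsto (fun T : ℝ => (T + 1) / T) atTop (𝓝 1) := by
      have : Tendsto (fun T : ℝ => 1 + T⁻¹) atTop (𝓝 (1 + 0)) :=
        tendsto_inv_atTop_zero.const_add 1
      rw [add_zero] at this
      refine this.congr' ?_
      filter_upwards [eventually_gt_atTop 0] with T hT
      field_simp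
    exact (((Real.continuous_sqrt.tendsto 1).comp h1).pow m).mul_const _
  rw [Real.sqrt_one, one_pow, one_mul] at lim
  refine ge_of_tendsto lim ?_
  filter_upwards [eventually_gt_atTop 0] with T hT
  exact key T hT

lemma IPhi_pos (m : ℕ) : 0 < IPhi m := by
  unfold IPhi
  rw [setIntegral_pos_iff_support_of_nonneg_ae (Eventually.of_forall fun z => Phi_nonneg z)
    (Phi_intOn m 1)]
  have hsub : ball (0 : E m) 1 \ {0} ⊆ Function.support (Phi m) ∩ ball 0 1 := by
    intro z hz
    have : 0 < ‖z‖ := norm_pos_iff.2 hz.2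
    refine ⟨?_, hz.1⟩
    simp only [Function.mem_support, Phi]
    positivity
  refine lt_of_lt_of_le ?_ (measure_mono hsub)
  rw [measure_diff_null (by simp)]
  exact measure_ball_pos _ _ one_pos

/-- Liouville theorem for the integral system. -/
theorem liouville (hm : 1 ≤ m) (hs : 1 < s) (hs2 : s * m < m + 8) (hκ : 0 < κ)
    (h : IntSol m p s κ M U) (i : Fin p) (x : E m) : U i x = 0 := by
  have hc : ∀ j (a b : E m), U j a = U j b := fun j a b => le_antisymm
    (const_of_good (fun c l hl => good_all hm hs hs2 hκ h c hl) j a b)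
    (const_of_good (fun c l hl => good_all hm hs hs2 hκ h c hl) j b a)
  by_contra hne
  have hpos : 0 < U i x := lt_of_le_of_ne (h.nonneg i x) (Ne.symm hne)
  set F := nl s (fun j => U j x) i with hF
  have hF0 : 0 < F := nl_pos hpos
  have hFc : ∀ y, nl s (fun j => U j y) i = F := by
    intro y; rw [hF]; congr 1; funext j; exact hc j y x
  have hIntg := h.int i 0
  have heq := h.eq i 0
  simp_rw [hFc] at hIntg heq
  have key : ∀ R : ℝ, 0 < R → R ^ 4 * IPhi m * F ≤ κ * U i 0 := by
    intro R hR
    rw [heq, ← Phi_int_ball m R hR, ← integral_mul_const]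
    have e : (fun y : E m => Phi m (0 - y) * F) = fun y => Phi m y * F := by
      funext y; rw [zero_sub, Phi_neg]
    rw [e] at hIntg ⊢
    exact setIntegral_le_integral hIntg (Eventually.of_forall fun z =>
      mul_nonneg (Phi_nonneg _) hF0.le)
  have hI := IPhi_pos m
  set Q := IPhi m * F with hQ
  have hQ0 : 0 < Q := mul_pos hI hF0
  set R := κ * U i 0 / Q + 1 with hR
  have hU0 := h.nonneg i 0
  have hR1 : 1 ≤ R := by
    have : 0 ≤ κ * U i 0 / Q := by positivity
    linarith
  have h1 := key R (by linarith)
  have h2 : R ≤ R ^ 4 := le_self_pow₀ hR1 (by norm_num)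
  have h3 : κ * U i 0 / Q < R := by linarith
  rw [div_lt_iff₀ hQ0] at h3
  have h4 : R * Q ≤ R ^ 4 * Q := by gcongr
  rw [mul_assoc] at h1
  linarith

end Bih

open MeasureTheory Metric Filter Topology
namespace Bih
variable {n : ℕ}

lemma fderiv_congr_nhds {u v : EuclideanSpace ℝ (Fin n) → ℝ} {x : EuclideanSpace ℝ (Fin n)}
    (h : u =ᶠ[𝓝 x] v) (e : EuclideanSpace ℝ (Fin n)) :
    (fun y => fderiv ℝ u y e) =ᶠ[𝓝 x] fun y => fderiv ℝ v y e := by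
  filter_upwards [h.eventuallyEq_nhds] with y hy
  rw [hy.fderiv_eq]

lemma lap_congr {u v : EuclideanSpace ℝ (Fin n) → ℝ} {x : EuclideanSpace ℝ (Fin n)}
    (h : u =ᶠ[𝓝 x] v) : lap u x = lap v x := by
  unfold lap
  refine Finset.sum_congr rfl fun i _ => ?_
  rw [(fderiv_congr_nhds h _).fderiv_eq]

lemma lap_congr' {u v : EuclideanSpace ℝ (Fin n) → ℝ} {x : EuclideanSpace ℝ (Fin n)}
    (h : u =ᶠ[𝓝 x] v) : lap u =ᶠ[𝓝 x] lap v := by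
  filter_upwards [h.eventuallyEq_nhds] with y hy
  exact lap_congr hy

lemma bilap_congr {u v : EuclideanSpace ℝ (Fin n) → ℝ} {x : EuclideanSpace ℝ (Fin n)}
    (h : u =ᶠ[𝓝 x] v) : bilap u x = bilap v x := lap_congr (lap_congr' h)

lemma lap_contDiff {k l : ℕ} (hkl : k + 2 ≤ l) {u : EuclideanSpace ℝ (Fin n) → ℝ}
    (h : ContDiff ℝ l u) : ContDiff ℝ k (lap u) := by
  unfold lap
  refine ContDiff.sum fun i _ => ?_
  have h1 : ContDiff ℝ ((k + 1 : ℕ) : WithTop ℕ∞)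
      (fun y => fderiv ℝ u y (EuclideanSpace.single i 1)) := by
    refine ContDiff.clm_apply (h.fderiv_right ?_) contDiff_const
    exact_mod_cast (by omega : k + 1 + 1 ≤ l)
  refine ContDiff.clm_apply (h1.fderiv_right ?_) contDiff_const
  norm_cast

lemma lap_zero (x : EuclideanSpace ℝ (Fin n)) : lap (fun _ => (0:ℝ)) x = 0 := by
  simp [lap]

lemma bilap_zero (x : EuclideanSpace ℝ (Fin n)) : bilap (fun _ => (0:ℝ)) x = 0 := by
  unfold bilap
  have : lap (fun _ : EuclideanSpace ℝ (Fin n) => (0:ℝ)) = fun _ => 0 := funext lap_zero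
  rw [this, lap_zero]

lemma lap_tsupport (u : EuclideanSpace ℝ (Fin n) → ℝ) : tsupport (lap u) ⊆ tsupport u := by
  refine closure_minimal (fun x hx => ?_) (isClosed_tsupport u)
  by_contra hc
  apply hx
  rw [lap_congr (v := fun _ => 0) (notMem_tsupport_iff_eventuallyEq.1 hc), lap_zero]

lemma lap_cs {u : EuclideanSpace ℝ (Fin n) → ℝ} (h : HasCompactSupport u) :
    HasCompactSupport (lap u) := h.mono' ((subset_tsupport _).trans (lap_tsupport u))

lemma fderiv_cmul (c : ℝ) (u : EuclideanSpace ℝ (Fin n) → ℝ) (z e : EuclideanSpace ℝ (Fin n)) :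
    fderiv ℝ (fun y => c * u y) z e = c * fderiv ℝ u z e := by
  have := fderiv_const_smul_field (𝕜 := ℝ) (f := u) c
  have h2 : (fun y => c * u y) = c • u := rfl
  rw [h2, this]; rfl

lemma lap_comp (u : EuclideanSpace ℝ (Fin n) → ℝ) (x : EuclideanSpace ℝ (Fin n)) (R : ℝ)
    (z : EuclideanSpace ℝ (Fin n)) :
    lap (fun y => u (x + R • y)) z = R ^ 2 * lap u (x + R • z) := by
  have key : ∀ (v : EuclideanSpace ℝ (Fin n) → ℝ) (e z : EuclideanSpace ℝ (Fin n)),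
      fderiv ℝ (fun y => v (x + R • y)) z e = R * fderiv ℝ v (x + R • z) e := by
    intro v e z
    have h1 := fderiv_comp_smul (𝕜 := ℝ) (f := fun y => v (x + y)) (x := z) R
    rw [h1, fderiv_comp_add_left]
    simp
  unfold lap
  rw [Finset.mul_sum]
  refine Finset.sum_congr rfl fun i _ => ?_
  have e1 : (fun y => fderiv ℝ (fun y => u (x + R • y)) y (EuclideanSpace.single i 1))
      = fun y => (fun w => R * fderiv ℝ u w (EuclideanSpace.single i 1)) (x + R • y) := by
    funext y; rw [key]
  rw [e1, key (fun w => R * fderiv ℝ u w (EuclideanSpace.single i 1)), fderiv_cmul]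
  ring

lemma lap_const_mul (c : ℝ) (u : EuclideanSpace ℝ (Fin n) → ℝ) (z : EuclideanSpace ℝ (Fin n)) :
    lap (fun y => c * u y) z = c * lap u z := by
  unfold lap
  rw [Finset.mul_sum]
  refine Finset.sum_congr rfl fun i _ => ?_
  have e1 : (fun y => fderiv ℝ (fun y => c * u y) y (EuclideanSpace.single i 1))
      = fun y => c * fderiv ℝ u y (EuclideanSpace.single i 1) := by
    funext y; rw [fderiv_cmul]
  rw [e1, fderiv_cmul]

lemma bilap_comp (u : EuclideanSpace ℝ (Fin n) → ℝ) (x : EuclideanSpace ℝ (Fin n)) (c R : ℝ)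
    (z : EuclideanSpace ℝ (Fin n)) :
    bilap (fun y => c * u (x + R • y)) z = c * R ^ 4 * bilap u (x + R • z) := by
  unfold bilap
  have e1 : lap (fun y => c * u (x + R • y)) = fun y => (c * R ^ 2) * lap u (x + R • y) := by
    funext y; rw [lap_const_mul, lap_comp]; ring
  rw [e1, lap_const_mul, lap_comp]; ring

lemma lap_add_at {u v : EuclideanSpace ℝ (Fin n) → ℝ} {z : EuclideanSpace ℝ (Fin n)}
    (hu : ContDiffAt ℝ 2 u z) (hv : ContDiffAt ℝ 2 v z) :
    lap (fun y => u y + v y) z = lap u z + lap v z := by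
  unfold lap
  rw [← Finset.sum_add_distrib]
  refine Finset.sum_congr rfl fun i _ => ?_
  have d : ∀ {w : EuclideanSpace ℝ (Fin n) → ℝ}, ContDiffAt ℝ 2 w z →
      DifferentiableAt ℝ (fun y => fderiv ℝ w y (EuclideanSpace.single i 1)) z := by
    intro w hw
    have : ContDiffAt ℝ 1 (fun y => fderiv ℝ w y (EuclideanSpace.single i 1)) z :=
      (hw.fderiv_right (by norm_num)).clm_apply contDiffAt_const
    exact this.differentiableAt (by norm_num)
  have e1 : (fun y => fderiv ℝ (fun y => u y + v y) y (EuclideanSpace.single i 1))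
      =ᶠ[𝓝 z] fun y => fderiv ℝ u y (EuclideanSpace.single i 1)
        + fderiv ℝ v y (EuclideanSpace.single i 1) := by
    filter_upwards [hu.eventually (by norm_num), hv.eventually (by norm_num)] with y h1 h2
    rw [fderiv_fun_add (h1.differentiableAt (by norm_num)) (h2.differentiableAt (by norm_num))]
    simp
  rw [e1.fderiv_eq, fderiv_fun_add (d hu) (d hv)]
  simp

lemma lap_add {u v : EuclideanSpace ℝ (Fin n) → ℝ} (hu : ContDiff ℝ 2 u) (hv : ContDiff ℝ 2 v)
    (z : EuclideanSpace ℝ (Fin n)) :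
    lap (fun y => u y + v y) z = lap u z + lap v z := lap_add_at hu.contDiffAt hv.contDiffAt

lemma bilap_add {u v : EuclideanSpace ℝ (Fin n) → ℝ} (hu : ContDiff ℝ 4 u) (hv : ContDiff ℝ 4 v)
    (z : EuclideanSpace ℝ (Fin n)) :
    bilap (fun y => u y + v y) z = bilap u z + bilap v z := by
  unfold bilap
  have e : lap (fun y => u y + v y) = fun y => lap u y + lap v y :=
    funext (lap_add (hu.of_le (by norm_num)) (hv.of_le (by norm_num)))
  rw [e, lap_add (lap_contDiff (k := 2) (l := 4) (by norm_num) hu)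
    (lap_contDiff (k := 2) (l := 4) (by norm_num) hv)]

lemma ibp_lap {ψ v : EuclideanSpace ℝ (Fin n) → ℝ} (hψ : ContDiff ℝ 2 ψ) (hv : ContDiff ℝ 2 v)
    (hc : HasCompactSupport ψ) : ∫ y, ψ y * lap v y = ∫ y, lap ψ y * v y := by
  have d1 : ∀ {w : EuclideanSpace ℝ (Fin n) → ℝ}, ContDiff ℝ 2 w → ∀ i,
      ContDiff ℝ 1 (fun y => fderiv ℝ w y (EuclideanSpace.single i 1)) := by
    intro w hw i
    exact (hw.fderiv_right (by norm_num)).clm_apply contDiff_const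
  have d2 : ∀ {w : EuclideanSpace ℝ (Fin n) → ℝ}, ContDiff ℝ 1 w → ∀ i,
      Continuous (fun y => fderiv ℝ w y (EuclideanSpace.single i 1)) := by
    intro w hw i
    exact (hw.continuous_fderiv (by norm_num)).clm_apply continuous_const
  have cs : ∀ {w : EuclideanSpace ℝ (Fin n) → ℝ}, HasCompactSupport w → ∀ i,
      HasCompactSupport (fun y => fderiv ℝ w y (EuclideanSpace.single i 1)) := by
    intro w hw i
    exact hw.fderiv_apply ℝ _
  have I : ∀ {f g : EuclideanSpace ℝ (Fin n) → ℝ}, Continuous f → Continuous g →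
      HasCompactSupport f → Integrable (fun y => f y * g y) := by
    intro f g hf hg hc
    exact (hf.mul hg).integrable_of_hasCompactSupport hc.mul_right
  have hψ1 : ContDiff ℝ 1 ψ := hψ.of_le (by norm_num)
  have hv1 : ContDiff ℝ 1 v := hv.of_le (by norm_num)
  unfold lap
  simp only [Finset.mul_sum, Finset.sum_mul]
  rw [integral_finsetSum _ fun i _ => I hψ.continuous (d2 (d1 hv i) i) hc,
    integral_finsetSum _ fun i _ => I (d2 (d1 hψ i) i) hv.continuous (cs (cs hc i) i)]
  refine Finset.sum_congr rfl fun i _ => ?_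
  rw [integral_mul_fderiv_eq_neg_fderiv_mul_of_integrable
    (I (d2 hψ1 i) (d2 hv1 i) (cs hc i)) (I hψ.continuous (d2 (d1 hv i) i) hc)
    (I hψ.continuous (d2 hv1 i) hc)
    (fun x _ => hψ1.differentiable (by norm_num) x)
    (fun x _ => (d1 hv i).differentiable (by norm_num) x)]
  rw [integral_mul_fderiv_eq_neg_fderiv_mul_of_integrable
    (I (d2 (d1 hψ i) i) hv.continuous (cs (cs hc i) i)) (I (d2 hψ1 i) (d2 hv1 i) (cs hc i))
    (I (d2 hψ1 i) hv.continuous (cs hc i))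
    (fun x _ => (d1 hψ i).differentiable (by norm_num) x)
    (fun x _ => hv1.differentiable (by norm_num) x), neg_neg]

lemma ibp_bilap {ψ v : EuclideanSpace ℝ (Fin n) → ℝ} (hψ : ContDiff ℝ 4 ψ) (hv : ContDiff ℝ 4 v)
    (hc : HasCompactSupport ψ) : ∫ y, ψ y * bilap v y = ∫ y, bilap ψ y * v y := by
  unfold bilap
  rw [ibp_lap (hψ.of_le (by norm_num)) (lap_contDiff (k := 2) (l := 4) (by norm_num) hv) hc,
    ibp_lap (lap_contDiff (k := 2) (l := 4) (by norm_num) hψ) (hv.of_le (by norm_num)) (lap_cs hc)]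

/-- Laplacian of a power of a shifted square norm. -/
lemma lap_rpow (ε b : ℝ) {y : EuclideanSpace ℝ (Fin n)} (hy : 0 < ‖y‖ ^ 2 + ε) :
    lap (fun z => (‖z‖ ^ 2 + ε) ^ b) y =
      (4 * b * (b - 1) + 2 * n * b) * (‖y‖ ^ 2 + ε) ^ (b - 1)
        - 4 * b * (b - 1) * ε * (‖y‖ ^ 2 + ε) ^ (b - 2) := by
  have key : ∀ (b : ℝ) {z : EuclideanSpace ℝ (Fin n)}, 0 < ‖z‖ ^ 2 + ε →
      HasFDerivAt (fun z => (‖z‖ ^ 2 + ε) ^ b)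
        ((b * (‖z‖ ^ 2 + ε) ^ (b - 1)) • (2 • (innerSL ℝ z))) z := by
    intro b z hz
    have h1 : HasFDerivAt (fun z : EuclideanSpace ℝ (Fin n) => ‖z‖ ^ 2 + ε) (2 • (innerSL ℝ z)) z :=
      (hasStrictFDerivAt_norm_sq z).hasFDerivAt.add_const ε
    exact h1.rpow_const (Or.inl hz.ne')
  have hopen : ∀ᶠ z in 𝓝 y, 0 < ‖z‖ ^ 2 + ε :=
    (by fun_prop : Continuous fun z : EuclideanSpace ℝ (Fin n) => ‖z‖ ^ 2 + ε).tendsto y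
      |>.eventually (lt_mem_nhds hy)
  have inn : ∀ (z : EuclideanSpace ℝ (Fin n)) (i : Fin n),
      innerSL ℝ z (EuclideanSpace.single i 1) = z i := by
    intro z i
    simp [innerSL_apply_apply, EuclideanSpace.inner_single_right]
  have e1 : ∀ i : Fin n, fderiv ℝ (fun z => fderiv ℝ (fun z => (‖z‖ ^ 2 + ε) ^ b) z
      (EuclideanSpace.single i 1)) y (EuclideanSpace.single i 1)
      = 2 * b * (‖y‖ ^ 2 + ε) ^ (b - 1) + 4 * b * (b-1) * (‖y‖ ^ 2 + ε) ^ (b - 2) * (y i) ^ 2 := by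
    intro i
    have e2 : (fun z => fderiv ℝ (fun z => (‖z‖ ^ 2 + ε) ^ b) z (EuclideanSpace.single i 1))
        =ᶠ[𝓝 y] fun z => (2 * b) * ((‖z‖ ^ 2 + ε) ^ (b - 1) * z i) := by
      filter_upwards [hopen] with z hz
      rw [(key b hz).fderiv]
      rw [two_nsmul]
      simp only [FunLike.coe_smul, Pi.smul_apply, FunLike.coe_add, Pi.add_apply, inn, smul_eq_mul]
      ring
    rw [e2.fderiv_eq]
    have h2 : HasFDerivAt (fun z : EuclideanSpace ℝ (Fin n) => z i)
        (EuclideanSpace.proj i : EuclideanSpace ℝ (Fin n) →L[ℝ] ℝ) y :=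
      (EuclideanSpace.proj i : EuclideanSpace ℝ (Fin n) →L[ℝ] ℝ).hasFDerivAt
    have h3 := ((key (b-1) hy).mul h2).const_mul (2 * b)
    have h3' := h3.fderiv
    simp only [Pi.mul_apply] at h3'
    erw [h3']
    simp [inn]
    rw [show b - 1 - 1 = b - 2 by ring]
    ring
  unfold lap
  rw [Finset.sum_congr rfl fun i _ => e1 i, Finset.sum_add_distrib,
    ← Finset.mul_sum (f := fun i => y i ^ 2)]
  have hsq : ∑ i, y i ^ 2 = ‖y‖ ^ 2 := by rw [EuclideanSpace.real_norm_sq_eq]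
  rw [hsq]
  have hp : (‖y‖ ^ 2 + ε) ^ (b - 1) = (‖y‖ ^ 2 + ε) ^ (b - 2) * (‖y‖ ^ 2 + ε) := by
    rw [← Real.rpow_add_one hy.ne']; congr 1; ring
  simp only [Finset.sum_const, Finset.card_univ, Fintype.card_fin, nsmul_eq_mul]
  rw [hp]; ring

end Bih

open MeasureTheory Metric Filter Topology
namespace Bih
variable {m : ℕ}

lemma rpow_contDiffAt (ε b : ℝ) {y : E m} (hy : 0 < ‖y‖ ^ 2 + ε) {k : WithTop ℕ∞} :
    ContDiffAt ℝ k (fun z : E m => (‖z‖ ^ 2 + ε) ^ b) y :=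
  ((contDiff_norm_sq ℝ).contDiffAt.add contDiffAt_const).rpow_const_of_ne hy.ne'

lemma bilap_rpow (ε : ℝ) {y : E m} (hy : 0 < ‖y‖ ^ 2 + ε) :
    bilap (fun z : E m => (‖z‖ ^ 2 + ε) ^ (-(m/2 : ℝ))) y =
      16 * (m/2) * (m/2+1) * (m/2+2) * (m/2+3) * ε^2 * (‖y‖ ^ 2 + ε) ^ (-(m/2 : ℝ) - 4) := by
  set a : ℝ := m / 2 with ha
  have hn : ((m + 4 : ℕ) : ℝ) = 2 * a + 4 := by rw [ha]; push_cast; ring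
  have hopen : ∀ᶠ z in 𝓝 y, 0 < ‖z‖ ^ 2 + ε :=
    (by fun_prop : Continuous fun z : E m => ‖z‖ ^ 2 + ε).tendsto y
      |>.eventually (lt_mem_nhds hy)
  have e : lap (fun z : E m => (‖z‖ ^ 2 + ε) ^ (-a)) =ᶠ[𝓝 y] fun z =>
      (-4 * a) * (‖z‖ ^ 2 + ε) ^ (-a - 1) + (-4 * a * (a+1) * ε) * (‖z‖ ^ 2 + ε) ^ (-a - 2) := by
    filter_upwards [hopen] with z hz
    rw [lap_rpow ε (-a) hz, hn]; ring
  unfold bilap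
  rw [lap_congr e, lap_add_at (contDiffAt_const.mul (rpow_contDiffAt ε _ hy))
    (contDiffAt_const.mul (rpow_contDiffAt ε _ hy)), lap_const_mul, lap_const_mul,
    lap_rpow ε _ hy, lap_rpow ε _ hy, hn]
  rw [show -a - 1 - 1 = -a - 2 by ring, show -a - 1 - 2 = -a - 3 by ring,
    show -a - 2 - 1 = -a - 3 by ring, show -a - 2 - 2 = -a - 4 by ring]
  ring

lemma Phi_eq_rpow {z : E m} (hz : z ≠ 0) : Phi m z = (‖z‖ ^ 2 + 0) ^ (-(m/2 : ℝ)) := by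
  have h0 : 0 < ‖z‖ := norm_pos_iff.2 hz
  rw [Phi, add_zero, Real.rpow_neg (by positivity), ← Real.rpow_natCast (‖z‖) 2,
    ← Real.rpow_mul h0.le, ← Real.rpow_natCast]
  congr 2; push_cast; ring

lemma Phi_ev {y : E m} (hy : y ≠ 0) :
    Phi m =ᶠ[𝓝 y] fun z => (‖z‖ ^ 2 + 0) ^ (-(m/2 : ℝ)) := by
  filter_upwards [isOpen_ne.mem_nhds hy] with z hz
  exact Phi_eq_rpow hz

lemma Phi_contDiffAt {y : E m} (hy : y ≠ 0) {k : WithTop ℕ∞} : ContDiffAt ℝ k (Phi m) y := by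
  refine ContDiffAt.congr_of_eventuallyEq (rpow_contDiffAt 0 _ ?_) (Phi_ev hy)
  have : 0 < ‖y‖ := norm_pos_iff.2 hy
  positivity

lemma bilap_Phi {y : E m} (hy : y ≠ 0) : bilap (Phi m) y = 0 := by
  rw [bilap_congr (Phi_ev hy), bilap_rpow]
  · ring
  · have : 0 < ‖y‖ := norm_pos_iff.2 hy
    positivity

/-- Outer cutoff. -/
noncomputable def chi (m : ℕ) (y : E m) : ℝ := Real.smoothTransition (2 - 2 * ‖y‖ ^ 2)

/-- Regularised kernel. -/
noncomputable def QQ (m : ℕ) (y : E m) : ℝ := Real.smoothTransition (4 * ‖y‖ ^ 2 - 1) * Phi m y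

lemma chi_smooth {k : ℕ∞} : ContDiff ℝ k (chi m) :=
  Real.smoothTransition.contDiff.comp (contDiff_const.sub (contDiff_const.mul (contDiff_norm_sq ℝ)))

lemma chi_one {y : E m} (h : ‖y‖ ^ 2 ≤ 1/2) : chi m y = 1 :=
  Real.smoothTransition.one_of_one_le (by linarith)

lemma chi_zero {y : E m} (h : 1 ≤ ‖y‖) : chi m y = 0 :=
  Real.smoothTransition.zero_of_nonpos (by nlinarith)

lemma chi_nonneg (y : E m) : 0 ≤ chi m y := Real.smoothTransition.nonneg _
lemma chi_le (y : E m) : chi m y ≤ 1 := Real.smoothTransition.le_one _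

lemma QQ_eq {y : E m} (h : 1/2 ≤ ‖y‖ ^ 2) : QQ m y = Phi m y := by
  rw [QQ, Real.smoothTransition.one_of_one_le (by linarith), one_mul]

lemma QQ_zero {y : E m} (h : ‖y‖ ^ 2 ≤ 1/4) : QQ m y = 0 := by
  rw [QQ, Real.smoothTransition.zero_of_nonpos (by linarith), zero_mul]

lemma QQ_nonneg (y : E m) : 0 ≤ QQ m y :=
  mul_nonneg (Real.smoothTransition.nonneg _) (Phi_nonneg y)

lemma QQ_le (y : E m) : QQ m y ≤ Phi m y :=
  mul_le_of_le_one_left (Phi_nonneg y) (Real.smoothTransition.le_one _)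

lemma QQ_smooth {k : ℕ∞} : ContDiff ℝ k (QQ m) := by
  rw [contDiff_iff_contDiffAt]
  intro y
  by_cases hy : y = 0
  · have : QQ m =ᶠ[𝓝 y] fun _ => 0 := by
      have : ∀ᶠ z : E m in 𝓝 y, ‖z‖ ^ 2 < 1/4 := by
        refine ((by fun_prop : Continuous fun z : E m => ‖z‖ ^ 2).tendsto y).eventually
          (gt_mem_nhds ?_)
        rw [hy]; simp
      filter_upwards [this] with z hz
      exact QQ_zero hz.le
    exact contDiffAt_const.congr_of_eventuallyEq this
  · refine ContDiffAt.mul ?_ (Phi_contDiffAt hy)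
    exact (Real.smoothTransition.contDiff.comp
      ((contDiff_const.mul (contDiff_norm_sq ℝ)).sub contDiff_const)).contDiffAt

/-- Concentrating density. -/
noncomputable def gg0 (m : ℕ) : E m → ℝ := bilap (QQ m)

/-- Mollified singular cut-off kernel. -/
noncomputable def psi1 (m : ℕ) (y : E m) : ℝ := chi m y * QQ m y

/-- The smooth remainder kernel. -/
noncomputable def KK (m : ℕ) (y : E m) : ℝ := gg0 m y - bilap (psi1 m) y

/-- The singular kernel. -/
noncomputable def HH (m : ℕ) (y : E m) : ℝ := chi m y * Phi m y

/-- The normalising constant. -/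
noncomputable def C0 (m : ℕ) : ℝ := ∫ y, gg0 m y

lemma psi1_smooth {k : ℕ∞} : ContDiff ℝ k (psi1 m) := chi_smooth.mul QQ_smooth

lemma bilap_cont {u : E m → ℝ} (h : ContDiff ℝ 4 u) : Continuous (bilap u) :=
  (lap_contDiff (k := 0) (l := 2) (by norm_num)
    (lap_contDiff (k := 2) (l := 4) (by norm_num) h)).continuous

lemma gg0_cont : Continuous (gg0 m) := bilap_cont (QQ_smooth (k := 4))

lemma KK_cont : Continuous (KK m) := gg0_cont.sub (bilap_cont (psi1_smooth (k := 4)))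

lemma gg0_zero {y : E m} (hy : 1 < ‖y‖) : gg0 m y = 0 := by
  have h0 : y ≠ 0 := norm_pos_iff.1 (by linarith)
  have : QQ m =ᶠ[𝓝 y] Phi m := by
    have : ∀ᶠ z : E m in 𝓝 y, 1 < ‖z‖ :=
      ((by fun_prop : Continuous fun z : E m => ‖z‖).tendsto y).eventually (lt_mem_nhds hy)
    filter_upwards [this] with z hz
    exact QQ_eq (by nlinarith)
  rw [gg0, bilap_congr this, bilap_Phi h0]

lemma KK_zero {y : E m} (hy : 1 < ‖y‖) : KK m y = 0 := by
  rw [KK, gg0_zero hy]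
  have : psi1 m =ᶠ[𝓝 y] fun _ => 0 := by
    have : ∀ᶠ z : E m in 𝓝 y, 1 < ‖z‖ :=
      ((by fun_prop : Continuous fun z : E m => ‖z‖).tendsto y).eventually (lt_mem_nhds hy)
    filter_upwards [this] with z hz
    rw [psi1, chi_zero hz.le, zero_mul]
  rw [bilap_congr this, bilap_zero, sub_zero]

lemma cs_of_zero {f : E m → ℝ} (h : ∀ y, 1 < ‖y‖ → f y = 0) : HasCompactSupport f :=
  HasCompactSupport.intro (isCompact_closedBall (0 : E m) 1) fun y hy => h y (by simpa using hy)

lemma KK_int : Integrable (KK m) :=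
  KK_cont.integrable_of_hasCompactSupport (cs_of_zero fun _ => KK_zero)

lemma gg0_int : Integrable (gg0 m) :=
  gg0_cont.integrable_of_hasCompactSupport (cs_of_zero fun _ => gg0_zero)

lemma HH_nonneg (y : E m) : 0 ≤ HH m y := mul_nonneg (chi_nonneg y) (Phi_nonneg y)

lemma HH_le (y : E m) : HH m y ≤ (ball (0 : E m) 1).indicator (Phi m) y := by
  by_cases h : y ∈ ball (0 : E m) 1
  · rw [Set.indicator_of_mem h]
    exact mul_le_of_le_one_left (Phi_nonneg y) (chi_le y)
  · rw [Set.indicator_of_notMem h, HH, chi_zero (by simpa using h), zero_mul]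

lemma HH_zero {y : E m} (hy : 1 ≤ ‖y‖) : HH m y = 0 := by rw [HH, chi_zero hy, zero_mul]

lemma HH_meas : Measurable (HH m) := (chi_smooth (k := 0)).continuous.measurable.mul (Phi_meas m)

lemma HH_int : Integrable (HH m) :=
  (Phi_ind_int m 1).mono' HH_meas.aestronglyMeasurable (Eventually.of_forall fun y => by
    rw [Real.norm_of_nonneg (HH_nonneg y)]; exact HH_le y)

/-- Scaled regularised kernel. -/
noncomputable def Qd (m : ℕ) (δ : ℝ) (y : E m) : ℝ := (δ ^ m)⁻¹ * QQ m (0 + δ⁻¹ • y)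

lemma Phi_scale {δ : ℝ} (hδ : 0 < δ) (y : E m) : (δ ^ m)⁻¹ * Phi m (0 + δ⁻¹ • y) = Phi m y := by
  rw [zero_add, Phi_smul _ (inv_pos.2 hδ)]
  have : δ ^ m ≠ 0 := by positivity
  rw [inv_pow, inv_inv]; field_simp

lemma Qd_nonneg {δ : ℝ} (hδ : 0 < δ) (y : E m) : 0 ≤ Qd m δ y :=
  mul_nonneg (by positivity) (QQ_nonneg _)

lemma Qd_le {δ : ℝ} (hδ : 0 < δ) (y : E m) : Qd m δ y ≤ Phi m y := by
  rw [← Phi_scale hδ y, Qd]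
  exact mul_le_mul_of_nonneg_left (QQ_le _) (by positivity)

lemma Qd_eq {δ : ℝ} (hδ : 0 < δ) {y : E m} (h : δ ^ 2 ≤ 2 * ‖y‖ ^ 2) : Qd m δ y = Phi m y := by
  rw [← Phi_scale hδ y, Qd, QQ_eq]
  rw [zero_add, norm_smul, mul_pow, Real.norm_of_nonneg (by positivity), inv_pow]
  have : 0 < δ ^ 2 := by positivity
  field_simp
  linarith

lemma Qd_smooth {δ : ℝ} {k : ℕ∞} : ContDiff ℝ k (Qd m δ) :=
  contDiff_const.mul (QQ_smooth.comp (contDiff_const.add (contDiff_const_smul _)))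

lemma bilap_Qd {δ : ℝ} (y : E m) :
    bilap (Qd m δ) y = (δ ^ (m+4))⁻¹ * gg0 m (δ⁻¹ • y) := by
  unfold Qd
  rw [bilap_comp, zero_add, gg0, pow_add, mul_inv, inv_pow]

lemma psid_eq {δ : ℝ} (hδ : 0 < δ) (h1 : δ ≤ 1) (y : E m) :
    chi m y * Qd m δ y = psi1 m y + (Qd m δ y + (-1) * QQ m (0 + (1:ℝ) • y)) := by
  rw [zero_add, one_smul]
  rcases le_total (‖y‖ ^ 2) (1/2) with h | h
  · rw [psi1, chi_one h]; ring
  · rw [psi1, QQ_eq h, Qd_eq hδ (by nlinarith)]; ring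

lemma bilap_psid {δ : ℝ} (hδ : 0 < δ) (h1 : δ ≤ 1) (y : E m) :
    bilap (fun y => chi m y * Qd m δ y) y = (δ ^ (m+4))⁻¹ * gg0 m (δ⁻¹ • y) - KK m y := by
  have e : (fun y => chi m y * Qd m δ y) = fun y => psi1 m y + (Qd m δ y + (-1) * QQ m (0 + (1:ℝ) • y)) :=
    funext (psid_eq hδ h1)
  have hq : ContDiff ℝ 4 (fun y : E m => (-1) * QQ m (0 + (1:ℝ) • y)) :=
    contDiff_const.mul ((QQ_smooth (k := 4)).comp
      (contDiff_const.add (contDiff_const_smul _)))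
  rw [e, bilap_add (psi1_smooth (k := 4)) ((Qd_smooth (k := 4)).add hq),
    bilap_add (Qd_smooth (k := 4)) hq, bilap_Qd, bilap_comp, KK, ← gg0, zero_add, one_smul]
  ring

lemma rep_delta {u : E m → ℝ} (hu : ContDiff ℝ 4 u) {δ : ℝ} (hδ : 0 < δ) (h1 : δ ≤ 1) :
    ∫ y, chi m y * Qd m δ y * bilap u y = (∫ y, gg0 m y * u (δ • y)) - ∫ y, KK m y * u y := by
  have hc : HasCompactSupport fun y : E m => chi m y * Qd m δ y :=
    cs_of_zero fun y hy => by rw [chi_zero hy.le, zero_mul]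
  have hs : ContDiff ℝ 4 fun y : E m => chi m y * Qd m δ y :=
    (chi_smooth (k := 4)).mul (Qd_smooth (k := 4))
  have hK : Integrable fun y => KK m y * u y :=
    (KK_cont.mul hu.continuous).integrable_of_hasCompactSupport
      (HasCompactSupport.mul_right (cs_of_zero fun _ => KK_zero))
  have hg : Integrable fun y => gg0 m y * u (δ • y) :=
    (gg0_cont.mul (hu.continuous.comp (continuous_const_smul δ))).integrable_of_hasCompactSupport
      (HasCompactSupport.mul_right (cs_of_zero fun _ => gg0_zero))
  have hsc := Measure.integral_comp_inv_smul_of_nonneg (volume : Measure (E m))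
    (fun y => gg0 m y * u (δ • y)) hδ.le
  have hsci : Integrable fun y : E m => gg0 m (δ⁻¹ • y) * u (δ • δ⁻¹ • y) :=
    hg.comp_smul (inv_ne_zero hδ.ne')
  rw [finrankE] at hsc
  simp only [smul_inv_smul₀ hδ.ne'] at hsc hsci
  rw [ibp_bilap hs hu hc]
  simp_rw [bilap_psid hδ h1, sub_mul, mul_assoc]
  rw [integral_sub (hsci.const_mul _) hK, integral_const_mul, hsc, smul_eq_mul, ← mul_assoc,
    inv_mul_cancel₀ (by positivity), one_mul]

lemma bdd_on_ball {f : E m → ℝ} (hf : Continuous f) :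
    ∃ B, 0 ≤ B ∧ ∀ y : E m, ‖y‖ ≤ 1 → |f y| ≤ B := by
  obtain ⟨B, hB⟩ := (isCompact_closedBall (0 : E m) 1).exists_bound_of_continuousOn hf.continuousOn
  refine ⟨|B|, abs_nonneg _, fun y hy => (hB y (by simpa using hy)).trans (le_abs_self B)⟩

lemma rep0 {u : E m → ℝ} (hu : ContDiff ℝ 4 u) :
    C0 m * u 0 = (∫ y, KK m y * u y) + ∫ y, HH m y * bilap u y := by
  have hb := bilap_cont hu
  obtain ⟨B, hB0, hB⟩ := bdd_on_ball hb
  obtain ⟨B1, hB10, hB1⟩ := bdd_on_ball hu.continuous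
  let d : ℕ → ℝ := fun k => 1 / ((k : ℝ) + 1)
  have hd0 : ∀ k, 0 < d k := fun k => by positivity
  have hd1 : ∀ k, d k ≤ 1 := fun k => by
    rw [div_le_one (by positivity)]; have : (0:ℝ) ≤ k := k.cast_nonneg
    linarith
  have hdl : Tendsto d atTop (𝓝 0) := tendsto_one_div_add_atTop_nhds_zero_nat
  have L1 : Tendsto (fun k => ∫ y, chi m y * Qd m (d k) y * bilap u y) atTop
      (𝓝 (∫ y, HH m y * bilap u y)) := by
    refine tendsto_integral_of_dominated_convergence
      (fun y => (ball (0 : E m) 1).indicator (Phi m) y * B) ?_ ((Phi_ind_int m 1).mul_const B) ?_ ?_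
    · intro k
      exact (((chi_smooth (k := 0)).continuous.mul (Qd_smooth (k := 0)).continuous).mul
        hb).aestronglyMeasurable
    · intro k
      refine Eventually.of_forall fun y => ?_
      by_cases hy : y ∈ ball (0 : E m) 1
      · rw [Set.indicator_of_mem hy, norm_mul, norm_mul, Real.norm_of_nonneg (chi_nonneg y),
          Real.norm_of_nonneg (Qd_nonneg (hd0 k) y)]
        have h1 := hB y (by simpa using (mem_ball_zero_iff.1 hy).le)
        have h2 : chi m y * Qd m (d k) y ≤ 1 * Phi m y :=
          mul_le_mul (chi_le y) (Qd_le (hd0 k) y) (Qd_nonneg (hd0 k) y) zero_le_one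
        rw [one_mul] at h2
        exact mul_le_mul h2 h1 (norm_nonneg _) (Phi_nonneg y)
      · rw [Set.indicator_of_notMem hy, chi_zero (by simpa using hy)]
        simp
    · have h1 : ∀ᵐ z : E m, z ≠ 0 := by simp [ae_iff]
      filter_upwards [h1] with y hy
      apply tendsto_const_nhds.congr'
      have h0 : 0 < ‖y‖ := norm_pos_iff.2 hy
      filter_upwards [hdl.eventually (ge_mem_nhds h0)] with k hk
      rw [HH, Qd_eq (hd0 k)]
      nlinarith [hd0 k]
  have L2 : Tendsto (fun k => ∫ y, gg0 m y * u (d k • y)) atTop (𝓝 (∫ y, gg0 m y * u 0)) := by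
    refine tendsto_integral_of_dominated_convergence
      (fun y => |gg0 m y| * B1) ?_ (gg0_int.abs.mul_const B1) ?_ ?_
    · intro k
      exact (gg0_cont.mul (hu.continuous.comp (continuous_const_smul (d k)))).aestronglyMeasurable
    · intro k
      refine Eventually.of_forall fun y => ?_
      rw [norm_mul, Real.norm_eq_abs]
      by_cases hy : 1 < ‖y‖
      · rw [gg0_zero hy]; simp
      · refine mul_le_mul_of_nonneg_left (hB1 _ ?_) (abs_nonneg _)
        rw [norm_smul, Real.norm_of_nonneg (hd0 k).le]
        exact mul_le_one₀ (hd1 k) (norm_nonneg _) (not_lt.1 hy)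
    · refine Eventually.of_forall fun y => ?_
      refine Tendsto.const_mul _ ?_
      have : Tendsto (fun k => d k • y) atTop (𝓝 ((0:ℝ) • y)) := hdl.smul_const y
      rw [zero_smul] at this
      exact (hu.continuous.tendsto 0).comp this
  have L3 := L2.sub_const (∫ y, KK m y * u y)
  have e : (fun k => ∫ y, chi m y * Qd m (d k) y * bilap u y) =
      fun k => (∫ y, gg0 m y * u (d k • y)) - ∫ y, KK m y * u y :=
    funext fun k => rep_delta hu (hd0 k) (hd1 k)
  rw [e] at L1
  have := tendsto_nhds_unique L1 L3
  rw [this, C0, integral_mul_const]; ring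

lemma C0_pos (hm : 1 ≤ m) : 0 < C0 m := by
  let u : E m → ℝ := fun z => (‖z‖ ^ 2 + 1) ^ (-(m/2 : ℝ))
  have hp : ∀ y : E m, 0 < ‖y‖ ^ 2 + 1 := fun y => by positivity
  have hu : ContDiff ℝ 4 u := contDiff_iff_contDiffAt.2 fun y => rpow_contDiffAt 1 _ (hp y)
  let A : ℝ := 16 * (m/2) * (m/2+1) * (m/2+2) * (m/2+3)
  have hm' : (0:ℝ) < m := by exact_mod_cast hm
  have hA : 0 < A := by positivity
  have hbu : ∀ y, bilap u y = A * (‖y‖ ^ 2 + 1) ^ (-(m/2 : ℝ) - 4) := fun y => by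
    rw [bilap_rpow 1 (hp y)]; ring
  let c : ℝ := A * 2 ^ (-(m/2 : ℝ) - 4)
  have hc : 0 < c := by positivity
  have hbc : ∀ y : E m, ‖y‖ ≤ 1 → c ≤ bilap u y := fun y hy => by
    rw [hbu]
    refine mul_le_mul_of_nonneg_left ?_ hA.le
    refine Real.rpow_le_rpow_of_nonpos (hp y) (by nlinarith [norm_nonneg y]) (by linarith)
  have hbn : ∀ y, 0 ≤ bilap u y := fun y => by
    rw [hbu]; have := hp y; positivity
  have hi := IPhi_pos (m := m)
  have ineq : ∀ k : ℕ, (∫ y, KK m y * u (((k:ℝ)+2) • y)) + c * IPhi m ≤ C0 m := by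
    intro k
    set R : ℝ := (k:ℝ) + 2 with hR
    have hR2 : 2 ≤ R := by have : (0:ℝ) ≤ k := k.cast_nonneg
                           linarith
    have hR0 : 0 < R := by linarith
    have hur : ContDiff ℝ 4 (fun y => 1 * u (0 + R • y)) :=
      contDiff_const.mul (hu.comp (contDiff_const.add (contDiff_const_smul _)))
    have h := rep0 hur
    simp_rw [bilap_comp] at h
    have hu0 : u 0 = 1 := by simp [u]
    simp only [smul_zero, zero_add, hu0, one_mul, mul_one] at h
    rw [h]
    refine add_le_add_right ?_ _
    have hIntg : Integrable fun y => HH m y * (R ^ 4 * bilap u (R • y)) := by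
      obtain ⟨B, hB0, hB⟩ := bdd_on_ball (f := fun y => R ^ 4 * bilap u (R • y))
        (continuous_const.mul ((bilap_cont hu).comp (continuous_const_smul R)))
      refine (HH_int.mul_const B).mono' ?_ ?_
      · exact HH_meas.aestronglyMeasurable.mul
          (continuous_const.mul ((bilap_cont hu).comp (continuous_const_smul R))).aestronglyMeasurable
      · refine Eventually.of_forall fun y => ?_
        rw [norm_mul, Real.norm_of_nonneg (HH_nonneg y)]
        by_cases hy : 1 ≤ ‖y‖
        · rw [HH_zero hy]; simp
        · exact mul_le_mul_of_nonneg_left (hB y (not_le.1 hy).le) (HH_nonneg y)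
    calc c * IPhi m = ∫ y in ball (0 : E m) R⁻¹, Phi m y * (R ^ 4 * c) := by
          rw [integral_mul_const, Phi_int_ball m _ (by positivity)]
          field_simp
      _ ≤ ∫ y in ball (0 : E m) R⁻¹, HH m y * (R ^ 4 * bilap u (R • y)) := by
          refine setIntegral_mono_on ((Phi_intOn m _).mul_const _) hIntg.integrableOn
            measurableSet_ball fun y hy => ?_
          have hy' : ‖y‖ < R⁻¹ := by simpa using hy
          have hRi : R⁻¹ ≤ 1/2 := by
            rw [inv_le_comm₀ hR0 (by norm_num)]; linarith
          rw [HH, chi_one (by nlinarith [norm_nonneg y]), one_mul]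
          refine mul_le_mul_of_nonneg_left ?_ (Phi_nonneg y)
          refine mul_le_mul_of_nonneg_left (hbc _ ?_) (by positivity)
          rw [norm_smul, Real.norm_of_nonneg hR0.le]
          calc R * ‖y‖ ≤ R * R⁻¹ := by gcongr
            _ = 1 := mul_inv_cancel₀ hR0.ne'
      _ ≤ ∫ y, HH m y * (R ^ 4 * bilap u (R • y)) :=
          setIntegral_le_integral hIntg (Eventually.of_forall fun y =>
            mul_nonneg (HH_nonneg y) (mul_nonneg (by positivity) (hbn _)))
  have L : Tendsto (fun k : ℕ => ∫ y, KK m y * u (((k:ℝ)+2) • y)) atTop (𝓝 (∫ _ : E m, 0)) := by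
    refine tendsto_integral_of_dominated_convergence (fun y => |KK m y|) ?_ KK_int.abs ?_ ?_
    · intro k
      exact (KK_cont.mul (hu.continuous.comp (continuous_const_smul _))).aestronglyMeasurable
    · intro k
      refine Eventually.of_forall fun y => ?_
      rw [norm_mul, Real.norm_eq_abs]
      refine mul_le_of_le_one_right (abs_nonneg _) ?_
      rw [Real.norm_of_nonneg (Real.rpow_nonneg (hp _).le _)]
      exact Real.rpow_le_one_of_one_le_of_nonpos (by nlinarith [norm_nonneg (((k:ℝ)+2) • y)]) (by linarith)
    · have h1 : ∀ᵐ z : E m, z ≠ 0 := by simp [ae_iff]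
      filter_upwards [h1] with y hy
      have h0 : 0 < ‖y‖ := norm_pos_iff.2 hy
      rw [← mul_zero (KK m y)]
      refine Tendsto.const_mul _ ?_
      refine (tendsto_rpow_neg_atTop (y := (m/2 : ℝ)) (by positivity)).comp ?_
      refine tendsto_atTop_add_const_right _ _ ?_
      refine (tendsto_pow_atTop (two_ne_zero)).comp ?_
      have : (fun k : ℕ => ‖((k:ℝ)+2) • y‖) = fun k : ℕ => ((k:ℝ)+2) * ‖y‖ := by
        funext k; rw [norm_smul, Real.norm_of_nonneg (by positivity)]
      rw [this]
      exact (tendsto_atTop_add_const_right _ _ tendsto_natCast_atTop_atTop).atTop_mul_const h0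
  rw [integral_zero] at L
  have := le_of_tendsto (L.add_const (c * IPhi m)) (Eventually.of_forall ineq)
  nlinarith [mul_pos hc hi]

/-- The local representation formula. -/
theorem rep {u : E m → ℝ} {x : E m} {R R' : ℝ} (hR : 0 < R) (hRR : R < R')
    (hu : ContDiffOn ℝ 4 u (ball x R')) :
    C0 m * u x = (∫ z, KK m z * u (x + R • z)) + R ^ 4 * ∫ z, HH m z * bilap u (x + R • z) := by
  let d : ℝ := (R' / R - 1) / 3
  have hd : 0 < d := by
    have : 1 < R' / R := by rwa [one_lt_div hR]
    show 0 < (R' / R - 1) / 3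
    linarith
  let η : ContDiffBump (0 : E m) := ⟨1 + d, 1 + 2 * d, by linarith, by linarith⟩
  let v : E m → ℝ := fun z => η z * u (x + R • z)
  have hv : ContDiff ℝ 4 v := by
    rw [contDiff_iff_contDiffAt]
    intro z
    by_cases hz : x + R • z ∈ ball x R'
    · refine η.contDiffAt.mul ?_
      exact (hu.contDiffAt (isOpen_ball.mem_nhds hz)).comp z
        (contDiffAt_const.add (contDiff_const_smul _).contDiffAt)
    · have hz2 : z ∉ tsupport η := by
        rw [η.tsupport_eq]
        intro h
        apply hz
        have h' : ‖z‖ ≤ 1 + 2 * d := by simpa using h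
        rw [mem_ball, dist_eq_norm, add_sub_cancel_left, norm_smul, Real.norm_of_nonneg hR.le]
        have : 1 + 2 * d < R' / R := by
          have : R' / R = 1 + 3 * d := by show _ = 1 + 3 * ((R' / R - 1) / 3); ring
          linarith
        rw [lt_div_iff₀ hR] at this
        nlinarith
      have : v =ᶠ[𝓝 z] fun _ => 0 := by
        filter_upwards [notMem_tsupport_iff_eventuallyEq.1 hz2] with y hy
        show η y * _ = 0
        rw [hy]; simp
      exact contDiffAt_const.congr_of_eventuallyEq this
  have hev : ∀ z : E m, ‖z‖ ≤ 1 → v =ᶠ[𝓝 z] fun y => 1 * u (x + R • y) := by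
    intro z hz
    have : ∀ᶠ y : E m in 𝓝 z, ‖y‖ < 1 + d :=
      ((by fun_prop : Continuous fun z : E m => ‖z‖).tendsto z).eventually
        (gt_mem_nhds (by linarith))
    filter_upwards [this] with y hy
    show η y * _ = _
    rw [η.one_of_mem_closedBall (by simpa using hy.le)]
  have h := rep0 hv
  have h0 : v 0 = u x := by rw [(hev 0 (by simp)).eq_of_nhds]; simp
  rw [h0] at h
  rw [h, ← integral_const_mul]
  congr 1
  · refine integral_congr_ae (Eventually.of_forall fun z => ?_)
    by_cases hz : 1 < ‖z‖
    · simp [KK_zero hz]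
    · simp only [(hev z (not_lt.1 hz)).eq_of_nhds, one_mul]
  · refine integral_congr_ae (Eventually.of_forall fun z => ?_)
    by_cases hz : 1 ≤ ‖z‖
    · simp [HH_zero hz]
    · simp only [bilap_congr (hev z (not_le.1 hz).le), bilap_comp]; ring

end Bih

open MeasureTheory Metric Filter Topology
namespace Bih
variable {m p : ℕ} {s M : ℝ} {U : Fin p → E m → ℝ}

/-- L1 modulus of continuity. -/
noncomputable def om (J : E m → ℝ) (h : E m) : ℝ := ∫ z, |J (z + h) - J z|

lemma om_tendsto {J : E m → ℝ} (hJ : Integrable J) : Tendsto (om J) (𝓝 0) (𝓝 0) := by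
  let G : E m → C(E m, E m) := fun h => ⟨fun z => z + h, by fun_prop⟩
  have hG : Continuous G := ContinuousMap.continuous_of_continuous_uncurry _ (by
    show Continuous fun q : E m × E m => q.2 + q.1
    fun_prop)
  have hgm : ∀ h, MeasurePreserving (G h) (volume : Measure (E m)) volume :=
    fun h => measurePreserving_add_right volume h
  let F := hJ.toL1 J
  have T := Filter.Tendsto.compMeasurePreservingLp (p := 1) (f := fun _ : E m => F)
    tendsto_const_nhds (hG.tendsto 0) hgm (hgm 0) ENNReal.one_ne_top
  have T2 := (tendsto_iff_norm_sub_tendsto_zero.1 T)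
  refine T2.congr fun h => ?_
  rw [L1.norm_eq_integral_norm, om]
  refine integral_congr_ae ?_
  have a1 := Lp.coeFn_compMeasurePreserving F (hgm h)
  have a2 := Lp.coeFn_compMeasurePreserving F (hgm 0)
  have a3 := (hgm h).quasiMeasurePreserving.ae_eq_comp hJ.coeFn_toL1
  have a4 := (hgm 0).quasiMeasurePreserving.ae_eq_comp hJ.coeFn_toL1
  filter_upwards [Lp.coeFn_sub (Lp.compMeasurePreserving (G h) (hgm h) F)
    (Lp.compMeasurePreserving (G 0) (hgm 0) F), a1, a2, a3, a4] with z h0 h1 h2 h3 h4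
  rw [h0, Pi.sub_apply, h1, h2, h3, h4, Real.norm_eq_abs]
  simp [G]

lemma aesm_aff {v : E m → ℝ} (hv : Measurable v) (x : E m) (R : ℝ) :
    Measurable fun z => v (x + R • z) :=
  hv.comp (by fun_prop : Continuous fun z : E m => x + R • z).measurable

lemma int_prod {J v : E m → ℝ} {B : ℝ} (hJ : Integrable J) (hv : Measurable v)
    (hB : ∀ y, |v y| ≤ B) (x : E m) (R : ℝ) : Integrable fun z => J z * v (x + R • z) := by
  refine hJ.mul_bdd (c := B) (aesm_aff hv x R).aestronglyMeasurable
    (Eventually.of_forall fun z => hB _)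

lemma trans_est {J v : E m → ℝ} {B : ℝ} (hJ : Integrable J) (hv : Measurable v)
    (hB : ∀ y, |v y| ≤ B) (x x' : E m) {R : ℝ} (hR : 0 < R) :
    |(∫ z, J z * v (x + R • z)) - ∫ z, J z * v (x' + R • z)| ≤ om J (R⁻¹ • (x' - x)) * B := by
  have e : (∫ z, J z * v (x + R • z)) = ∫ z, J (z + R⁻¹ • (x' - x)) * v (x' + R • z) := by
    rw [← integral_add_right_eq_self (fun z => J z * v (x + R • z)) (R⁻¹ • (x' - x))]
    refine integral_congr_ae (Eventually.of_forall fun z => ?_)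
    simp only [smul_add, smul_inv_smul₀ hR.ne']
    congr 2
    abel
  have hJ' : Integrable fun z => J (z + R⁻¹ • (x' - x)) := hJ.comp_add_right _
  rw [e, ← integral_sub (int_prod hJ' hv hB x' R) (int_prod hJ hv hB x' R), om,
    ← integral_mul_const, ← Real.norm_eq_abs]
  refine norm_integral_le_of_norm_le ((hJ'.sub hJ).abs.mul_const B) (Eventually.of_forall fun z => ?_)
  rw [← sub_mul, norm_mul]
  exact mul_le_mul_of_nonneg_left (hB _) (norm_nonneg _)

lemma nl_le (hs : 1 < s) {W : Fin p → ℝ} (hW : ∀ i, 0 ≤ W i) (h : len W ≤ M) (i : Fin p) :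
    nl s W i ≤ M ^ (s - 1) * M := by
  have h0 := len_nonneg W
  unfold nl
  exact mul_le_mul (Real.rpow_le_rpow h0 h (by linarith)) ((le_len W i).trans h) (hW i)
    (Real.rpow_nonneg (h0.trans h) _)

/-- Bounded entire solutions of the representation formula. -/
structure RepSol (m p : ℕ) (s M : ℝ) (U : Fin p → E m → ℝ) : Prop where
  cont : ∀ i, Continuous (U i)
  nonneg : ∀ i x, 0 ≤ U i x
  bdd : ∀ x, len (fun j => U j x) ≤ M
  rep : ∀ i x R, 0 < R → C0 m * U i x = (∫ z, KK m z * U i (x + R • z)) +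
    R ^ 4 * ∫ z, HH m z * nl s (fun j => U j (x + R • z)) i

/-- Rescaled nonlinear density. -/
noncomputable def Fk (m : ℕ) (f : E m → ℝ) (x : E m) (R : ℝ) (y : E m) : ℝ :=
  chi m (R⁻¹ • (y - x)) * (Phi m (x - y) * f y)

lemma Fk_int (f : E m → ℝ) (x : E m) {R : ℝ} (hR : 0 < R) :
    R ^ 4 * ∫ z, HH m z * f (x + R • z) = ∫ y, Fk m f x R y := by
  rw [← integral_add_left_eq_self (Fk m f x R) x]
  have h := Measure.integral_comp_smul_of_nonneg (volume : Measure (E m))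
    (fun y => Fk m f x R (x + y)) R (hR := hR.le)
  rw [finrankE] at h
  have h2 : ∫ y, Fk m f x R (x + y) = R ^ (m+4) * ∫ z, Fk m f x R (x + R • z) := by
    rw [h, smul_eq_mul, ← mul_assoc, mul_inv_cancel₀ (by positivity), one_mul]
  rw [h2, ← integral_const_mul, ← integral_const_mul]
  refine integral_congr_ae (Eventually.of_forall fun z => ?_)
  simp only [Fk, HH]
  rw [add_sub_cancel_left, inv_smul_smul₀ hR.ne', show x - (x + R • z) = -(R • z) by abel, Phi_neg,
    Phi_smul R hR, pow_add]
  have : R ^ m ≠ 0 := by positivity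
  field_simp

lemma Fk_ev (f : E m → ℝ) (x y : E m) :
    ∀ᶠ k : ℕ in atTop, Fk m f x ((k:ℝ)+1) y = Phi m (x - y) * f y := by
  obtain ⟨N, hN⟩ := exists_nat_ge (2 * ‖y - x‖)
  filter_upwards [eventually_ge_atTop N] with k hk
  have hk' : (N:ℝ) ≤ k := by exact_mod_cast hk
  rw [Fk, chi_one, one_mul]
  rw [norm_smul, Real.norm_of_nonneg (by positivity)]
  have h1 : ((k:ℝ)+1)⁻¹ * ‖y - x‖ ≤ 1/2 := by
    rw [inv_mul_le_iff₀ (by positivity)]; linarith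
  have h0 : 0 ≤ ((k:ℝ)+1)⁻¹ * ‖y - x‖ := by positivity
  nlinarith

lemma Fk_meas {f : E m → ℝ} (hf : Measurable f) (x : E m) (R : ℝ) : Measurable (Fk m f x R) := by
  unfold Fk
  refine Measurable.mul ?_ (((Phi_meas m).comp (by fun_prop)).mul hf)
  exact ((chi_smooth (k := 0)).continuous.comp
    (by fun_prop : Continuous fun y : E m => R⁻¹ • (y - x))).measurable

lemma RepSol.fcont (h : RepSol m p s M U) (hs : 1 < s) (i : Fin p) :
    Continuous fun y => nl s (fun j => U j y) i :=
  (nl_cont hs i).comp (continuous_pi fun j => h.cont j)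

end Bih

open MeasureTheory Metric Filter Topology
namespace Bih
variable {m p : ℕ} {s M : ℝ} {U : Fin p → E m → ℝ}

/-- If a potential of a nonnegative function is finite, its infimum is zero. -/
lemma pot_inf (hm : 1 ≤ m) {f : E m → ℝ} (hf : Measurable f) (hf0 : ∀ y, 0 ≤ f y)
    (hIntg : ∀ x, Integrable fun y => Phi m (x - y) * f y) {δ : ℝ} (hδ : 0 < δ)
    (hge : ∀ x, δ ≤ ∫ y, Phi m (x - y) * f y) : False := by
  set V : ℝ := (volume (ball (0 : E m) 1)).toReal with hV
  have hV0 : 0 < V := ENNReal.toReal_pos (measure_ball_pos _ _ one_pos).ne' measure_ball_lt_top.ne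
  have hI := IPhi_nonneg m
  set D : ℝ := (IPhi m + V) / V with hD
  have hD0 : 0 ≤ D := by positivity
  have vol : ∀ R : ℝ, 0 < R → volume (ball (0 : E m) R) = ENNReal.ofReal (R ^ (m+4) * V) := by
    intro R hR
    rw [Measure.addHaar_ball volume (0 : E m) hR.le, finrankE, ENNReal.ofReal_mul (by positivity), hV,
      ENNReal.ofReal_toReal measure_ball_lt_top.ne]
  let A : ℝ → E m → ℝ := fun R y => ∫ x in ball (0 : E m) R, Phi m (y - x)
  have A0 : ∀ R y, 0 ≤ A R y := fun R y => integral_nonneg fun z => Phi_nonneg _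
  have b1 : ∀ R : ℝ, 0 < R → ∀ y, A R y / (R ^ (m+4) * V) ≤ (R ^ m)⁻¹ * D := by
    intro R hR y
    have h := Phi_int_small_aux y (A := ball (0 : E m) R) measure_ball_lt_top.ne hR
    rw [vol R hR, ENNReal.toReal_ofReal (by positivity)] at h
    rw [div_le_iff₀ (by positivity)]
    refine h.trans (le_of_eq ?_)
    have : R ^ m ≠ 0 := by positivity
    rw [hD, pow_add]; field_simp
  have b2 : ∀ R : ℝ, 0 < R → ∀ y : E m, y ≠ 0 →
      A R y / (R ^ (m+4) * V) ≤ 2 ^ m * (1 + D) * Phi m y := by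
    intro R hR y hy
    have hy0 : 0 < ‖y‖ := norm_pos_iff.2 hy
    have hP := Phi_nonneg y
    rcases le_total (2 * R) ‖y‖ with hc | hc
    · have h1 : A R y ≤ ∫ x in ball (0 : E m) R, 2 ^ m * Phi m y := by
        refine setIntegral_mono_on (Phi_sub_intOn y measure_ball_lt_top.ne)
          (integrableOn_const measure_ball_lt_top.ne) measurableSet_ball fun x hx => ?_
        have hx' : ‖x‖ < R := by simpa using hx
        have h2 : ‖y‖ / 2 ≤ ‖y - x‖ := by
          have := norm_sub_norm_le y x
          linarith
        refine (Phi_le_of_le (by positivity) h2).trans (le_of_eq ?_)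
        rw [Phi, div_pow, inv_div]; rfl
      rw [setIntegral_const, Measure.real, vol R hR, ENNReal.toReal_ofReal (by positivity),
        smul_eq_mul] at h1
      rw [div_le_iff₀ (by positivity)]
      refine h1.trans ?_
      have : 0 ≤ 2 ^ m * Phi m y * (R ^ (m+4) * V) := by positivity
      nlinarith
    · refine (b1 R hR y).trans ?_
      have h2 : (R ^ m)⁻¹ ≤ 2 ^ m * Phi m y := by
        rw [Phi, ← div_eq_mul_inv, inv_le_comm₀ (by positivity) (by positivity), inv_div, ← div_pow]
        gcongr; linarith
      have h3 : 0 ≤ 2 ^ m * Phi m y := by positivity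
      calc (R ^ m)⁻¹ * D ≤ 2 ^ m * Phi m y * D := by gcongr
        _ ≤ _ := by nlinarith
  have AM : ∀ R, Measurable (A R) := by
    intro R
    have : StronglyMeasurable (Function.uncurry fun (y x : E m) => Phi m (y - x)) :=
      ((Phi_meas m).comp (by fun_prop : Measurable fun q : E m × E m => q.1 - q.2)).stronglyMeasurable
    exact this.integral_prod_right.measurable
  have key : ∀ k : ℕ, ENNReal.ofReal δ ≤
      ∫⁻ y, ENNReal.ofReal (A ((k:ℝ)+1) y / (((k:ℝ)+1) ^ (m+4) * V) * f y) := by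
    intro k
    set R : ℝ := (k:ℝ)+1 with hRd
    have hR : 0 < R := by positivity
    have hp : ∀ x, ENNReal.ofReal δ ≤ ∫⁻ y, ENNReal.ofReal (Phi m (x - y)) * ENNReal.ofReal (f y) := by
      intro x
      refine (ENNReal.ofReal_le_ofReal (hge x)).trans (le_of_eq ?_)
      rw [ofReal_integral_eq_lintegral_ofReal (hIntg x)
        (Eventually.of_forall fun y => mul_nonneg (Phi_nonneg _) (hf0 y))]
      simp_rw [ENNReal.ofReal_mul (Phi_nonneg _)]
    have h1 : ENNReal.ofReal δ * volume (ball (0 : E m) R) ≤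
        ∫⁻ x in ball (0 : E m) R, ∫⁻ y, ENNReal.ofReal (Phi m (x - y)) * ENNReal.ofReal (f y) := by
      rw [← setLIntegral_const]
      exact lintegral_mono fun x => hp x
    rw [lintegral_lintegral_swap] at h1
    · have h2 : ∀ y, ∫⁻ x in ball (0 : E m) R, ENNReal.ofReal (Phi m (x - y)) * ENNReal.ofReal (f y)
          = ENNReal.ofReal (A R y) * ENNReal.ofReal (f y) := by
        intro y
        rw [lintegral_mul_const' _ _ ENNReal.ofReal_ne_top]
        congr 1
        rw [ofReal_integral_eq_lintegral_ofReal (Phi_sub_intOn y measure_ball_lt_top.ne)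
          (Eventually.of_forall fun z => Phi_nonneg _)]
        simp_rw [Phi_sub_comm y]
      simp_rw [h2] at h1
      have hv : 0 < R ^ (m+4) * V := by positivity
      have h3 : ∀ y, ENNReal.ofReal (A R y / (R ^ (m+4) * V) * f y) =
          (ENNReal.ofReal (R ^ (m+4) * V))⁻¹ * (ENNReal.ofReal (A R y) * ENNReal.ofReal (f y)) := by
        intro y
        rw [← ENNReal.ofReal_inv_of_pos hv, ← ENNReal.ofReal_mul (A0 R y),
          ← ENNReal.ofReal_mul (by positivity)]
        congr 1; rw [div_eq_mul_inv]; ring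
      simp_rw [h3]
      rw [lintegral_const_mul' _ _ (by simpa using hv)]
      rw [vol R hR] at h1
      have hvn : ENNReal.ofReal (R ^ (m+4) * V) ≠ 0 := by simpa using hv
      rw [mul_comm, ← div_eq_mul_inv, ENNReal.le_div_iff_mul_le (Or.inl hvn)
        (Or.inl ENNReal.ofReal_ne_top)]
      exact h1
    · refine Measurable.aemeasurable ?_
      exact (((Phi_meas m).comp (by fun_prop : Measurable fun q : E m × E m => q.1 - q.2)).ennreal_ofReal).mul
        ((hf.comp measurable_snd).ennreal_ofReal)
  have L : Tendsto (fun k : ℕ =>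
      ∫⁻ y, ENNReal.ofReal (A ((k:ℝ)+1) y / (((k:ℝ)+1) ^ (m+4) * V) * f y)) atTop
      (𝓝 (∫⁻ _ : E m, 0)) := by
    have hne : ∀ᵐ z : E m, z ≠ 0 := by simp [ae_iff]
    refine tendsto_lintegral_of_dominated_convergence
      (fun y => ENNReal.ofReal (2 ^ m * (1 + D) * (Phi m (0 - y) * f y))) ?_ ?_ ?_ ?_
    · intro k
      exact (((AM _).div_const _).mul hf).ennreal_ofReal
    · intro k
      filter_upwards [hne] with y hy
      refine ENNReal.ofReal_le_ofReal ?_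
      rw [← mul_assoc, zero_sub, Phi_neg]
      exact mul_le_mul_of_nonneg_right (b2 _ (by positivity) y hy) (hf0 y)
    · have := ((hIntg 0).const_mul (2 ^ m * (1 + D))).lintegral_lt_top.ne
      exact this
    · filter_upwards [hne] with y hy
      rw [← ENNReal.ofReal_zero]
      refine ENNReal.tendsto_ofReal ?_
      rw [← zero_mul (f y)]
      refine Tendsto.mul_const _ ?_
      have lim : Tendsto (fun k : ℕ => ((((k:ℝ)+1)) ^ m)⁻¹ * D) atTop (𝓝 0) := by
        rw [← zero_mul D]
        refine Tendsto.mul_const _ ?_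
        refine tendsto_inv_atTop_zero.comp ((tendsto_pow_atTop (by omega)).comp ?_)
        exact tendsto_atTop_add_const_right _ _ tendsto_natCast_atTop_atTop
      refine squeeze_zero (fun k => ?_) (fun k => b1 _ (by positivity) y) lim
      exact div_nonneg (A0 _ _) (by positivity)
  rw [lintegral_zero] at L
  have := ge_of_tendsto L (Eventually.of_forall key)
  simp at this
  linarith

lemma HH_int_pos : 0 < ∫ z, HH m z := by
  have h1 : ∫ z in ball (0 : E m) (1/2), Phi m z ≤ ∫ z, HH m z := by
    calc ∫ z in ball (0 : E m) (1/2), Phi m z = ∫ z in ball (0 : E m) (1/2), HH m z := by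
          refine setIntegral_congr_fun measurableSet_ball fun y hy => ?_
          have hy' : ‖y‖ < 1/2 := by simpa using hy
          rw [HH, chi_one (by nlinarith [norm_nonneg y]), one_mul]
      _ ≤ _ := setIntegral_le_integral HH_int (Eventually.of_forall HH_nonneg)
  rw [Phi_int_ball m _ (by norm_num)] at h1
  have := IPhi_pos m
  linarith [show 0 < (1/2:ℝ)^4 * IPhi m by positivity]

lemma fatou_enorm {G : ℕ → E m → ℝ} {f : E m → ℝ}
    (hGf : ∀ᵐ x, Tendsto (fun (n : ℕ) ↦ G n x) atTop (𝓝 (f x)))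
    (hG : ∀ (n : ℕ), AEMeasurable (fun x ↦ ‖G n x‖ₑ)) :
    ∫⁻ x, ‖f x‖ₑ ≤ liminf (fun n ↦ ∫⁻ x, ‖G n x‖ₑ) atTop :=
  lintegral_congr_ae (by filter_upwards [hGf] with x hx using hx.enorm.liminf_eq) ▸
    (MeasureTheory.lintegral_liminf_le' hG)

theorem RepSol.intSol (hm : 1 ≤ m) (hs : 1 < s) (h : RepSol m p s M U) :
    IntSol m p s (C0 m) M U := by
  have hC := C0_pos hm
  have hM : 0 ≤ M := (len_nonneg _).trans (h.bdd 0)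
  have hUM : ∀ (i : Fin p) (y : E m), |U i y| ≤ M := fun i y => by
    rw [abs_of_nonneg (h.nonneg i y)]
    exact (le_len (fun j => U j y) i).trans (h.bdd y)
  set N : ℝ := M ^ (s - 1) * M with hN
  have hfn : ∀ (i : Fin p) (y : E m), 0 ≤ nl s (fun j => U j y) i := fun i y => nl_nonneg (h.nonneg i y)
  have hfN : ∀ (i : Fin p) (y : E m), |nl s (fun j => U j y) i| ≤ N := fun i y => by
    rw [abs_of_nonneg (hfn i y)]
    exact nl_le hs (fun j => h.nonneg j y) (h.bdd y) i
  have hfm : ∀ i, Measurable fun y => nl s (fun j => U j y) i := fun i => (h.fcont hs i).measurable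
  -- uniform bound
  set B : ℝ := C0 m * M + (∫ z, |KK m z|) * M with hB
  have hK : ∀ (i : Fin p) (x : E m) (R : ℝ), |∫ z, KK m z * U i (x + R • z)| ≤ (∫ z, |KK m z|) * M := by
    intro i x R
    rw [← integral_mul_const, ← Real.norm_eq_abs]
    refine norm_integral_le_of_norm_le (KK_int.abs.mul_const M) (Eventually.of_forall fun z => ?_)
    rw [norm_mul]
    exact mul_le_mul_of_nonneg_left (hUM _ _) (norm_nonneg _)
  have hbd : ∀ (i : Fin p) (x : E m) (R : ℝ), 0 < R → R ^ 4 * ∫ z, HH m z * nl s (fun j => U j (x + R • z)) i ≤ B := by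
    intro i x R hR
    have h1 := h.rep i x R hR
    have h2 := (abs_le.1 (hK i x R)).1
    have h3 := mul_le_mul_of_nonneg_left ((le_abs_self _).trans (hUM i x)) hC.le
    linarith
  have hFn : ∀ (i : Fin p) (x : E m) (R : ℝ) (y : E m), 0 ≤ Fk m (fun y => nl s (fun j => U j y) i) x R y := fun i x R y =>
    mul_nonneg (chi_nonneg _) (mul_nonneg (Phi_nonneg _) (hfn i y))
  have hFi : ∀ (i : Fin p) (x : E m) (R : ℝ), 0 < R → Integrable (Fk m (fun y => nl s (fun j => U j y) i) x R) := by
    intro i x R hR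
    have h1 : Integrable fun y => (ball (0 : E m) R).indicator (Phi m) (x - y) * N :=
      ((Phi_ind_int m R).comp_sub_left x).mul_const N
    refine h1.mono' (Fk_meas (hfm i) x R).aestronglyMeasurable (Eventually.of_forall fun y => ?_)
    rw [Real.norm_of_nonneg (hFn i x R y)]
    by_cases hy : x - y ∈ ball (0 : E m) R
    · rw [Set.indicator_of_mem hy, Fk]
      have h2 := (le_abs_self _).trans (hfN i y)
      have h3 := mul_le_mul_of_nonneg_left h2 (Phi_nonneg (x - y))
      exact (mul_le_of_le_one_left (mul_nonneg (Phi_nonneg _) (hfn i y)) (chi_le _)).trans h3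
    · rw [Set.indicator_of_notMem hy, Fk, chi_zero]
      · simp
      · rw [norm_smul, norm_inv, Real.norm_of_nonneg hR.le, norm_sub_rev, ← div_eq_inv_mul,
          one_le_div hR]
        simpa using hy
  have hFint : ∀ (i : Fin p) (x : E m) (R : ℝ), 0 < R → ∫ y, Fk m (fun y => nl s (fun j => U j y) i) x R y ≤ B := by
    intro i x R hR
    rw [← Fk_int _ x hR]
    exact hbd i x R hR
  have hIntg : ∀ (i : Fin p) (x : E m), Integrable (fun y => Phi m (x - y) * nl s (fun j => U j y) i) := by
    intro i x
    have hmeas : Measurable fun y => Phi m (x - y) * nl s (fun j => U j y) i :=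
      ((Phi_meas m).comp (by fun_prop)).mul (hfm i)
    refine ⟨hmeas.aestronglyMeasurable, ?_⟩
    have hle := fatou_enorm
      (G := fun (k : ℕ) (y : E m) => Fk m (fun y => nl s (fun j => U j y) i) x ((k:ℝ)+1) y)
      (f := fun y : E m => Phi m (x - y) * nl s (fun j => U j y) i)
      (Eventually.of_forall fun y => tendsto_const_nhds.congr'
        ((Fk_ev (fun y => nl s (fun j => U j y) i) x y).mono fun k hk => hk.symm))
      (fun k => (Fk_meas (hfm i) x _).enorm.aemeasurable)
    refine lt_of_le_of_lt hle (lt_of_le_of_lt ?_ (ENNReal.ofReal_lt_top (r := B)))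
    refine liminf_le_of_le (by isBoundedDefault) ?_
    intro b hb
    obtain ⟨k, hk⟩ := hb.exists
    refine hk.trans ?_
    have e : ∀ y, ‖Fk m (fun y => nl s (fun j => U j y) i) x ((k:ℝ)+1) y‖ₑ =
        ENNReal.ofReal (Fk m (fun y => nl s (fun j => U j y) i) x ((k:ℝ)+1) y) := fun y =>
      Real.enorm_of_nonneg (hFn _ _ _ _)
    simp_rw [e]
    rw [← ofReal_integral_eq_lintegral_ofReal (hFi i x _ (by positivity))
      (Eventually.of_forall fun y => hFn i x _ y)]
    exact ENNReal.ofReal_le_ofReal (hFint i x _ (by positivity))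
  let P : Fin p → E m → ℝ := fun i x => ∫ y, Phi m (x - y) * nl s (fun j => U j y) i
  have hlim : ∀ (i : Fin p) (x : E m), Tendsto (fun k : ℕ => ∫ y, Fk m (fun y => nl s (fun j => U j y) i) x ((k:ℝ)+1) y)
      atTop (𝓝 (P i x)) := by
    intro i x
    refine tendsto_integral_of_dominated_convergence _
      (fun k => (Fk_meas (hfm i) x _).aestronglyMeasurable) (hIntg i x) ?_ ?_
    · intro k
      refine Eventually.of_forall fun y => ?_
      rw [Real.norm_of_nonneg (hFn i x _ y)]
      exact mul_le_of_le_one_left (mul_nonneg (Phi_nonneg _) (hfn i y)) (chi_le _)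
    · exact Eventually.of_forall fun y => tendsto_const_nhds.congr'
        ((Fk_ev (fun y => nl s (fun j => U j y) i) x y).mono fun k hk => hk.symm)
  have hlimK : ∀ (i : Fin p) (x : E m), Tendsto (fun k : ℕ => ∫ z, KK m z * U i (x + ((k:ℝ)+1) • z)) atTop
      (𝓝 (C0 m * U i x - P i x)) := by
    intro i x
    refine ((tendsto_const_nhds (x := C0 m * U i x)).sub (hlim i x)).congr fun k => ?_
    rw [h.rep i x ((k:ℝ)+1) (by positivity),
      Fk_int (fun y => nl s (fun j => U j y) i) x (by positivity)]; ring
  have hconst : ∀ (i : Fin p) (x : E m), C0 m * U i x - P i x = C0 m * U i 0 - P i 0 := by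
    intro i x
    have h1 : Tendsto (fun k : ℕ => (∫ z, KK m z * U i (x + ((k:ℝ)+1) • z)) -
        ∫ z, KK m z * U i (0 + ((k:ℝ)+1) • z)) atTop (𝓝 0) := by
      have hk : Tendsto (fun k : ℕ => ((k:ℝ)+1)⁻¹ • ((0 : E m) - x)) atTop (𝓝 0) := by
        have h0 : Tendsto (fun k : ℕ => ((k:ℝ)+1)⁻¹) atTop (𝓝 0) := by
          refine tendsto_inv_atTop_zero.comp ?_
          exact tendsto_atTop_add_const_right _ _ tendsto_natCast_atTop_atTop
        simpa using h0.smul_const ((0 : E m) - x)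
      have h2 := ((om_tendsto (KK_int (m := m))).comp hk).mul_const M
      rw [zero_mul] at h2
      refine squeeze_zero_norm (fun k => ?_) h2
      exact trans_est KK_int (h.cont i).measurable (hUM i) x 0 (by positivity)
    have h3 := tendsto_nhds_unique h1 ((hlimK i x).sub (hlimK i 0))
    linarith
  have hP0 : ∀ (i : Fin p) (x : E m), 0 ≤ P i x := fun i x =>
    integral_nonneg fun y => mul_nonneg (Phi_nonneg _) (hfn i y)
  have hzero : ∀ i, C0 m * U i 0 - P i 0 = 0 := by
    intro i
    set c := C0 m * U i 0 - P i 0 with hc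
    by_contra hne
    rcases lt_or_gt_of_ne hne with hlt | hgt
    · refine pot_inf hm (hfm i) (hfn i) (hIntg i) (δ := -c) (by linarith) fun x => ?_
      have h1 := hconst i x
      have h2 := mul_nonneg hC.le (h.nonneg i x)
      show -c ≤ P i x
      linarith
    · have hUb : ∀ x, c / C0 m ≤ U i x := by
        intro x
        rw [div_le_iff₀ hC]
        have h1 := hconst i x
        have h2 := hP0 i x
        linarith
      set b := c / C0 m with hb
      have hb0 : 0 < b := by positivity
      have hfb : ∀ x, b ^ (s-1) * b ≤ nl s (fun j => U j x) i := by
        intro x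
        unfold nl
        refine mul_le_mul (Real.rpow_le_rpow hb0.le ((hUb x).trans (le_len (fun j => U j x) i))
          (by linarith)) (hUb x) hb0.le (Real.rpow_nonneg (len_nonneg _) _)
      set b' := b ^ (s-1) * b with hb'
      have hb'0 : 0 < b' := by positivity
      have hHp := HH_int_pos (m := m)
      have key : ∀ R : ℝ, 0 < R → R ^ 4 * ((∫ z, HH m z) * b') ≤ B := by
        intro R hR
        refine le_trans ?_ (hbd i 0 R hR)
        refine mul_le_mul_of_nonneg_left ?_ (by positivity)
        rw [← integral_mul_const]
        refine integral_mono (HH_int.mul_const _) (int_prod HH_int (hfm i) (hfN i) 0 R) fun z => ?_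
        exact mul_le_mul_of_nonneg_left (hfb _) (HH_nonneg z)
      set q := (∫ z, HH m z) * b' with hq
      have hq0 : 0 < q := mul_pos hHp hb'0
      have hB0 : 0 ≤ B := by
        have : 0 ≤ ∫ z, |KK m z| := integral_nonneg fun z => abs_nonneg _
        positivity
      have hR1 : 1 ≤ B / q + 1 := by
        have : 0 ≤ B / q := by positivity
        linarith
      have h1 := key (B / q + 1) (by linarith)
      have h2 : B / q + 1 ≤ (B / q + 1) ^ 4 := le_self_pow₀ hR1 (by norm_num)
      have h3 : (B / q + 1) * q ≤ B := (mul_le_mul_of_nonneg_right h2 hq0.le).trans h1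
      rw [add_mul, div_mul_cancel₀ _ hq0.ne'] at h3
      linarith
  refine ⟨h.cont, h.nonneg, h.bdd, hIntg, fun i x => ?_⟩
  have h1 := hconst i x
  rw [hzero i] at h1
  show C0 m * U i x = P i x
  linarith

theorem RepSol.zero (hm : 1 ≤ m) (hs : 1 < s) (hs2 : s * m < m + 8) (h : RepSol m p s M U)
    (i : Fin p) (x : E m) : U i x = 0 := liouville hm hs hs2 (C0_pos hm) (h.intSol hm hs) i x

end Bih

open MeasureTheory Metric Filter Topology
namespace Bih
variable {m p : ℕ} {s M : ℝ}

/-- Approximate (local) solutions of the representation formula. -/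
structure ApSol (m p : ℕ) (s M r : ℝ) (W : Fin p → E m → ℝ) : Prop where
  meas : ∀ i, Measurable (W i)
  nonneg : ∀ i x, 0 ≤ W i x
  bdd : ∀ x, len (fun j => W j x) ≤ M
  rep : ∀ i x R, 0 < R → ‖x‖ + R < r → C0 m * W i x = (∫ z, KK m z * W i (x + R • z)) +
    R ^ 4 * ∫ z, HH m z * nl s (fun j => W j (x + R • z)) i

/-- Modulus of continuity. -/
noncomputable def gmod (m : ℕ) (s M : ℝ) (h : E m) : ℝ :=
  om (KK m) h * M + om (HH m) h * (M ^ (s-1) * M)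

lemma gmod_tendsto : Tendsto (gmod m s M) (𝓝 0) (𝓝 0) := by
  have := ((om_tendsto (KK_int (m := m))).mul_const M).add
    ((om_tendsto (HH_int (m := m))).mul_const (M ^ (s-1) * M))
  rw [zero_mul, zero_mul, add_zero] at this
  exact this

lemma ApSol.le {r : ℝ} {W : Fin p → E m → ℝ} (h : ApSol m p s M r W) (i : Fin p) (y : E m) :
    |W i y| ≤ M := by
  rw [abs_of_nonneg (h.nonneg i y)]
  exact (le_len (fun j => W j y) i).trans (h.bdd y)

lemma ApSol.nlle {r : ℝ} {W : Fin p → E m → ℝ} (hs : 1 < s) (h : ApSol m p s M r W) (i : Fin p)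
    (y : E m) : |nl s (fun j => W j y) i| ≤ M ^ (s-1) * M := by
  rw [abs_of_nonneg (nl_nonneg (h.nonneg i y))]
  exact nl_le hs (fun j => h.nonneg j y) (h.bdd y) i

lemma ApSol.nlmeas {r : ℝ} {W : Fin p → E m → ℝ} (hs : 1 < s) (h : ApSol m p s M r W) (i : Fin p) :
    Measurable fun y => nl s (fun j => W j y) i :=
  (nl_cont hs i).measurable.comp (measurable_pi_lambda _ fun j => h.meas j)

lemma ApSol.equi {r : ℝ} {W : Fin p → E m → ℝ} (hs : 1 < s) (h : ApSol m p s M r W) (i : Fin p)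
    (x x' : E m) (hx : ‖x‖ + 1 < r) (hx' : ‖x'‖ + 1 < r) :
    |C0 m * W i x - C0 m * W i x'| ≤ gmod m s M (x' - x) := by
  have h1 := trans_est KK_int (h.meas i) (h.le i) x x' one_pos
  have h2 := trans_est HH_int (h.nlmeas hs i) (h.nlle hs i) x x' one_pos
  rw [h.rep i x 1 one_pos hx, h.rep i x' 1 one_pos hx']
  rw [inv_one, one_smul] at h1 h2
  rw [gmod]
  refine le_trans ?_ (add_le_add h1 h2)
  refine le_trans (le_of_eq ?_) (abs_add_le _ _)
  congr 1
  ring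

theorem compactness (hm : 1 ≤ m) (hs : 1 < s) (W : ℕ → Fin p → E m → ℝ) (r : ℕ → ℝ)
    (hr : Tendsto r atTop atTop) (hW : ∀ k, ApSol m p s M (r k) (W k)) :
    ∃ (V : Fin p → E m → ℝ) (φ : ℕ → ℕ), RepSol m p s M V ∧
      ∀ i x, Tendsto (fun k => W (φ k) i x) atTop (𝓝 (V i x)) := by
  have hC := C0_pos hm
  let D : ℕ → E m := TopologicalSpace.denseSeq (E m)
  have hD : DenseRange D := TopologicalSpace.denseRange_denseSeq (E m)
  obtain ⟨a, -, φ, hφ, hlim⟩ := (isCompact_univ_pi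
    (fun _ : Fin p × ℕ => isCompact_Icc (a := (0:ℝ)) (b := M))).tendsto_subseq
    (x := fun k q => W k q.1 (D q.2)) (fun k q _ => ⟨(hW k).nonneg _ _,
      (le_abs_self _).trans ((hW k).le _ _)⟩)
  rw [tendsto_pi_nhds] at hlim
  have hrφ : Tendsto (fun k => r (φ k)) atTop atTop := hr.comp hφ.tendsto_atTop
  have hcau : ∀ (i : Fin p) (x : E m), CauchySeq (fun k => W (φ k) i x) := by
    intro i x
    rw [Metric.cauchySeq_iff']
    intro ε hε
    have hg := (Metric.tendsto_nhds_nhds.1 (gmod_tendsto (m := m) (s := s) (M := M)))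
      (C0 m * (ε / 4)) (by positivity)
    obtain ⟨δ, hδ, hg⟩ := hg
    obtain ⟨j, hj⟩ := hD.exists_dist_lt x hδ
    have hc := (hlim (i, j)).cauchySeq
    rw [Metric.cauchySeq_iff'] at hc
    obtain ⟨N1, hN1⟩ := hc (ε / 4) (by positivity)
    obtain ⟨N2, hN2⟩ := (hrφ.eventually (eventually_gt_atTop (‖x‖ + ‖D j‖ + 1))).exists_forall_of_atTop
    have near : ∀ k ≥ N2, |W (φ k) i x - W (φ k) i (D j)| ≤ ε / 4 := by
      intro k hk
      have h1 := ((hW (φ k)).equi hs i x (D j) (by linarith [hN2 k hk, norm_nonneg (D j)])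
        (by linarith [hN2 k hk, norm_nonneg x]))
      have h2 := hg (x := D j - x) (by rwa [dist_zero_right, ← dist_eq_norm, dist_comm])
      rw [dist_zero_right, Real.norm_eq_abs] at h2
      rw [← mul_sub, abs_mul, abs_of_pos hC] at h1
      exact le_of_mul_le_mul_left (h1.trans ((le_abs_self _).trans h2.le)) hC
    refine ⟨max N1 N2, fun k hk => ?_⟩
    have e1 := near k ((le_max_right _ _).trans hk)
    have e2 := near (max N1 N2) (le_max_right _ _)
    have e3 := hN1 k ((le_max_left _ _).trans hk)
    have e4 := hN1 (max N1 N2) (le_max_left _ _)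
    simp only [Function.comp, Real.dist_eq] at e3 e4 ⊢
    rw [abs_le] at e1 e2
    rw [abs_lt] at e3 e4 ⊢
    constructor <;> linarith [e1.1, e1.2, e2.1, e2.2, e3.1, e3.2, e4.1, e4.2]
  choose V hV using fun i x => cauchySeq_tendsto_of_complete (hcau i x)
  have hequi : ∀ (i : Fin p) (x x' : E m), |C0 m * V i x - C0 m * V i x'| ≤ gmod m s M (x' - x) := by
    intro i x x'
    refine le_of_tendsto ((((hV i x).const_mul _).sub ((hV i x').const_mul _)).abs) ?_
    filter_upwards [hrφ.eventually (eventually_gt_atTop (‖x‖ + ‖x'‖ + 1))] with k hk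
    exact ((hW (φ k)).equi hs i x x' (by linarith [norm_nonneg x']) (by linarith [norm_nonneg x]))
  have hcont : ∀ i, Continuous (V i) := by
    intro i
    have : Continuous fun x => C0 m * V i x := by
      rw [continuous_iff_continuousAt]
      intro x
      rw [ContinuousAt, tendsto_iff_norm_sub_tendsto_zero]
      have ht : Tendsto (fun y => x - y) (𝓝 x) (𝓝 (0 : E m)) := by
        have : Continuous fun y : E m => x - y := by fun_prop
        simpa using this.tendsto x
      exact squeeze_zero (fun _ => norm_nonneg _) (fun y => hequi i y x) (gmod_tendsto.comp ht)
    have h2 : V i = fun x => (C0 m)⁻¹ * (C0 m * V i x) := by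
      funext x; field_simp
    rw [h2]
    exact this.const_mul _
  refine ⟨V, φ, ⟨hcont, fun i x => ge_of_tendsto' (hV i x) fun k => (hW _).nonneg i x, fun x => ?_,
    ?_⟩, hV⟩
  · refine le_of_tendsto' (((len_cont p).tendsto _).comp (tendsto_pi_nhds.2 fun j => hV j x))
      fun k => (hW (φ k)).bdd x
  · intro i x R hR
    have hl := (hV i x).const_mul (C0 m)
    have hk : Tendsto (fun k => ∫ z, KK m z * W (φ k) i (x + R • z)) atTop
        (𝓝 (∫ z, KK m z * V i (x + R • z))) := by
      refine tendsto_integral_of_dominated_convergence (fun z => |KK m z| * M)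
        (fun k => (int_prod KK_int ((hW _).meas i) ((hW _).le i) x R).aestronglyMeasurable)
        (KK_int.abs.mul_const M) ?_ ?_
      · intro k
        refine Eventually.of_forall fun z => ?_
        rw [norm_mul]
        exact mul_le_mul_of_nonneg_left ((hW _).le i _) (norm_nonneg _)
      · exact Eventually.of_forall fun z => (hV i _).const_mul _
    have hh : Tendsto (fun k => ∫ z, HH m z * nl s (fun j => W (φ k) j (x + R • z)) i) atTop
        (𝓝 (∫ z, HH m z * nl s (fun j => V j (x + R • z)) i)) := by
      refine tendsto_integral_of_dominated_convergence (fun z => |HH m z| * (M ^ (s-1) * M))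
        (fun k => (int_prod HH_int ((hW _).nlmeas hs i) ((hW _).nlle hs i) x R).aestronglyMeasurable)
        (HH_int.abs.mul_const _) ?_ ?_
      · intro k
        refine Eventually.of_forall fun z => ?_
        rw [norm_mul]
        exact mul_le_mul_of_nonneg_left ((hW _).nlle hs i _) (norm_nonneg _)
      · refine Eventually.of_forall fun z => Tendsto.const_mul _ ?_
        exact ((nl_cont hs i).tendsto _).comp (tendsto_pi_nhds.2 fun j => hV j _)
    refine tendsto_nhds_unique hl ((hk.add (hh.const_mul (R ^ 4))).congr' ?_)
    filter_upwards [hrφ.eventually (eventually_gt_atTop (‖x‖ + R))] with k hk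
    exact ((hW (φ k)).rep i x R hR hk).symm

theorem no_seq (hm : 1 ≤ m) (hs : 1 < s) (hs2 : s * m < m + 8) (W : ℕ → Fin p → E m → ℝ) (r : ℕ → ℝ)
    (hr : Tendsto r atTop atTop) (hW : ∀ k, ApSol m p s M (r k) (W k))
    (h1 : ∀ k, len (fun j => W k j 0) = 1) : False := by
  obtain ⟨V, φ, hV, hl⟩ := compactness hm hs W r hr hW
  have h2 : Tendsto (fun k => len (fun j => W (φ k) j 0)) atTop (𝓝 (len (fun j => V j 0))) :=
    ((len_cont p).tendsto _).comp (tendsto_pi_nhds.2 fun j => hl j 0)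
  simp_rw [h1] at h2
  have h3 := tendsto_nhds_unique h2 tendsto_const_nhds
  have h4 : len (fun j => V j 0) = 0 := by
    simp_rw [hV.zero hm hs hs2]
    simp [len]
  linarith

end Bih

open MeasureTheory Metric Filter Topology
namespace Bih
variable {m p : ℕ} {s : ℝ}

theorem blowup (hs : 1 < s) {U : Fin p → E m → ℝ}
    (h0 : ∀ i, ∀ x ∈ ball (0 : E m) 1 \ {0}, 0 ≤ U i x)
    (hC : ∀ i, ContDiffOn ℝ 4 (U i) (ball (0 : E m) 1 \ {0}))
    (hE : ∀ i, ∀ x ∈ ball (0 : E m) 1 \ {0}, bilap (U i) x = nl s (fun j => U j x) i)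
    {x : E m} (hx : 0 < ‖x‖) (hx2 : ‖x‖ < 1/2) {K : ℝ} (hK : 0 < K)
    (hbig : 4 * K < len (fun j => U j x) ^ ((s-1)/4) * ‖x‖) :
    ∃ (W : Fin p → E m → ℝ) (r : ℝ), K ≤ r ∧ ApSol m p s (2 ^ (4/(s-1))) r W ∧
      len (fun j => W j 0) = 1 := by
  classical
  set S : Set (E m) := ball (0 : E m) 1 \ {0} with hS
  have hSo : IsOpen S := isOpen_ball.sdiff isClosed_singleton
  set α : ℝ := (s-1)/4 with hα
  have hα0 : 0 < α := by rw [hα]; linarith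
  set ρ : ℝ := ‖x‖/2 with hρ
  have hsub : closedBall x ρ ⊆ S := by
    intro v hv
    rw [mem_closedBall, dist_eq_norm] at hv
    have h1 : ‖v‖ ≤ ‖v - x‖ + ‖x‖ := by simpa using norm_add_le (v - x) x
    have h2 : ‖x‖ ≤ ‖v - x‖ + ‖v‖ := by
      have := norm_add_le (x - v) v
      rw [norm_sub_rev] at this; simpa using this
    refine ⟨by rw [mem_ball_zero_iff]; linarith, ?_⟩
    rw [Set.mem_singleton_iff]
    exact norm_pos_iff.1 (by linarith)
  let L : E m → ℝ := fun v => len (fun j => U j v)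
  have hLc : ContinuousOn L S :=
    (len_cont p).comp_continuousOn (continuousOn_pi.2 fun j => (hC j).continuousOn)
  let g : E m → ℝ := fun v => L v ^ α * (ρ - ‖v - x‖)
  have hg : ContinuousOn g (closedBall x ρ) := by
    refine ContinuousOn.mul ?_ (by fun_prop)
    exact (hLc.mono hsub).rpow_const fun _ _ => Or.inr hα0.le
  obtain ⟨y, hy, hmax⟩ := (isCompact_closedBall x ρ).exists_isMaxOn
    ⟨x, mem_closedBall_self (by positivity)⟩ hg
  have hgx : g x ≤ g y := hmax (mem_closedBall_self (by positivity))
  have hgx' : 2 * K < g x := by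
    show 2 * K < len (fun j => U j x) ^ α * (ρ - ‖x - x‖)
    rw [sub_self, norm_zero, sub_zero, hρ]; linarith
  set d : ℝ := ρ - ‖y - x‖ with hd
  set m₀ : ℝ := L y with hm₀
  have hgy : 2 * K < m₀ ^ α * d := hgx'.trans_le hgx
  have hm0 : 0 ≤ m₀ := len_nonneg _
  have hmp : 0 < m₀ := by
    rcases hm0.eq_or_lt with h | h
    · rw [← h, Real.zero_rpow hα0.ne', zero_mul] at hgy; linarith
    · exact h
  have hma : 0 < m₀ ^ α := Real.rpow_pos_of_pos hmp _
  have hdp : 0 < d := by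
    by_contra hneg
    have := mul_nonpos_of_nonneg_of_nonpos hma.le (not_lt.1 hneg)
    linarith
  set μ : ℝ := (m₀ ^ α)⁻¹ with hμ
  have hμp : 0 < μ := inv_pos.2 hma
  set r : ℝ := m₀ ^ α * d / 2 with hr
  have hμr : μ * r = d / 2 := by rw [hμ, hr]; field_simp
  have hdist : ∀ z ∈ ball (0 : E m) r, ‖(y + μ • z) - x‖ ≤ ρ - d / 2 := by
    intro z hz
    rw [mem_ball_zero_iff] at hz
    have h1 : ‖(y + μ • z) - x‖ ≤ ‖y - x‖ + ‖μ • z‖ := by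
      rw [show (y + μ • z) - x = (y - x) + μ • z by abel]; exact norm_add_le _ _
    rw [norm_smul, Real.norm_of_nonneg hμp.le] at h1
    have h2 := mul_le_mul_of_nonneg_left hz.le hμp.le
    linarith
  have hcb : ∀ z ∈ ball (0 : E m) r, y + μ • z ∈ closedBall x ρ := by
    intro z hz
    rw [mem_closedBall, dist_eq_norm]
    linarith [hdist z hz]
  have hin : ∀ z ∈ ball (0 : E m) r, y + μ • z ∈ S := fun z hz => hsub (hcb z hz)
  have hbd : ∀ z ∈ ball (0 : E m) r, L (y + μ • z) ≤ 2 ^ (4/(s-1)) * m₀ := by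
    intro z hz
    have h1 : L (y + μ • z) ^ α * (ρ - ‖(y + μ • z) - x‖) ≤ m₀ ^ α * d := hmax (hcb z hz)
    have hL0 : 0 ≤ L (y + μ • z) := len_nonneg _
    have hLa := Real.rpow_nonneg hL0 α
    have h2 : L (y + μ • z) ^ α * (d / 2) ≤ m₀ ^ α * d :=
      (mul_le_mul_of_nonneg_left (by linarith [hdist z hz]) hLa).trans h1
    have h3 : L (y + μ • z) ^ α ≤ 2 * m₀ ^ α := by
      refine le_of_mul_le_mul_right ?_ hdp
      linarith
    have h4 : (2 ^ (4/(s-1)) * m₀) ^ α = 2 * m₀ ^ α := by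
      rw [Real.mul_rpow (by positivity) hm0, ← Real.rpow_mul (by norm_num), hα]
      have : s - 1 ≠ 0 := by linarith
      rw [show 4 / (s-1) * ((s-1)/4) = 1 by field_simp, Real.rpow_one]
    rw [← h4] at h3
    exact (Real.rpow_le_rpow_iff hL0 (by positivity) hα0).1 h3
  let w : Fin p → E m → ℝ := fun i z => m₀⁻¹ * U i (y + μ • z)
  let W : Fin p → E m → ℝ := fun i => (ball (0 : E m) r).piecewise (w i) (fun _ => 0)
  have hWin : ∀ i, ∀ z ∈ ball (0 : E m) r, W i z = w i z := fun i z hz =>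
    Set.piecewise_eq_of_mem _ _ _ hz
  have hWout : ∀ i, ∀ z ∉ ball (0 : E m) r, W i z = 0 := fun i z hz =>
    Set.piecewise_eq_of_notMem _ _ _ hz
  have hwC : ∀ i, ContDiffOn ℝ 4 (w i) (ball (0 : E m) r) := by
    intro i
    refine contDiffOn_const.mul ?_
    exact (hC i).comp (by fun_prop) hin
  have hlenw : ∀ z, len (fun j => w j z) = m₀⁻¹ * L (y + μ • z) := fun z =>
    len_smul (inv_nonneg.2 hm0) _
  refine ⟨W, r, by rw [hr]; linarith, ⟨?_, ?_, ?_, ?_⟩, ?_⟩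
  · intro i
    exact (hwC i).continuousOn.measurable_piecewise continuousOn_const measurableSet_ball
  · intro i z
    by_cases hz : z ∈ ball (0 : E m) r
    · rw [hWin i z hz]
      exact mul_nonneg (inv_nonneg.2 hm0) (h0 i _ (hin z hz))
    · rw [hWout i z hz]
  · intro z
    by_cases hz : z ∈ ball (0 : E m) r
    · simp_rw [fun j => hWin j z hz]
      rw [hlenw, inv_mul_le_iff₀ hmp, mul_comm]
      exact hbd z hz
    · simp_rw [fun j => hWout j z hz]
      have : len (fun _ : Fin p => (0:ℝ)) = 0 := by simp [len]
      rw [this]; positivity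
  · intro i x' R hR hxR
    have hb : ball x' (r - ‖x'‖) ⊆ ball (0 : E m) r := by
      refine ball_subset_ball' ?_
      rw [dist_zero_right]; linarith
    have hx' : x' ∈ ball (0 : E m) r := hb (mem_ball_self (by linarith))
    have hmem : ∀ z : E m, ‖z‖ ≤ 1 → x' + R • z ∈ ball (0 : E m) r := by
      intro z hz
      rw [mem_ball_zero_iff]
      have h1 := norm_add_le x' (R • z)
      rw [norm_smul, Real.norm_of_nonneg hR.le] at h1
      have := mul_le_mul_of_nonneg_left hz hR.le
      linarith
    have hrep := rep hR (by linarith : R < r - ‖x'‖) ((hwC i).mono hb)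
    rw [hWin i x' hx', hrep]
    congr 1
    · refine integral_congr_ae (Eventually.of_forall fun z => ?_)
      show KK m z * w i (x' + R • z) = KK m z * W i (x' + R • z)
      by_cases hz : ‖z‖ ≤ 1
      · rw [hWin i _ (hmem z hz)]
      · rw [KK_zero (not_le.1 hz), zero_mul, zero_mul]
    · congr 1
      refine integral_congr_ae (Eventually.of_forall fun z => ?_)
      show HH m z * bilap (w i) (x' + R • z) = HH m z * nl s (fun j => W j (x' + R • z)) i
      by_cases hz : ‖z‖ ≤ 1
      · congr 1
        have hv := hmem z hz
        simp_rw [fun j => hWin j _ hv]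
        show bilap (fun z => m₀⁻¹ * U i (y + μ • z)) (x' + R • z) = _
        rw [bilap_comp, hE i _ (hin _ hv)]
        show _ = nl s (fun j => m₀⁻¹ * U j (y + μ • (x' + R • z))) i
        rw [nl_smul (inv_pos.2 hmp)]
        congr 1
        rw [hμ, inv_pow, ← Real.rpow_natCast, ← Real.rpow_mul hm0, Real.inv_rpow hm0, ← mul_inv]
        congr 1
        nth_rewrite 1 [← Real.rpow_one m₀]
        rw [← Real.rpow_add hmp, hα]
        congr 1
        push_cast; ring
      · rw [HH_zero (not_le.1 hz).le, zero_mul, zero_mul]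
  · have hz : (0 : E m) ∈ ball (0 : E m) r := mem_ball_self (by rw [hr]; positivity)
    simp_rw [fun j => hWin j 0 hz]
    rw [hlenw, smul_zero, add_zero]
    exact inv_mul_cancel₀ hmp.ne'

theorem main (m p : ℕ) (hm : 1 ≤ m) (hs : 1 < s) (hs2 : s * m < m + 8) :
    ∃ C > (0 : ℝ), ∀ U : Fin p → E m → ℝ,
      (∀ i, ∀ x ∈ ball (0 : E m) 1 \ {0}, 0 ≤ U i x) →
      (∀ i, ContDiffOn ℝ 4 (U i) (ball (0 : E m) 1 \ {0})) →
      (∀ i, ∀ x ∈ ball (0 : E m) 1 \ {0}, bilap (U i) x = nl s (fun j => U j x) i) →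
      ∀ x : E m, 0 < ‖x‖ → ‖x‖ < 1/2 → len (fun j => U j x) ≤ C * ‖x‖ ^ (-(4/(s-1))) := by
  by_contra hneg
  push Not at hneg
  have hs0 : 0 < s - 1 := by linarith
  have key : ∀ k : ℕ, ∃ (W : Fin p → E m → ℝ) (r : ℝ), (k:ℝ) + 1 ≤ r ∧
      ApSol m p s (2 ^ (4/(s-1))) r W ∧ len (fun j => W j 0) = 1 := by
    intro k
    obtain ⟨U, h0, hC, hE, x, hx, hx2, hb⟩ := hneg ((4 * ((k:ℝ)+1)) ^ (4/(s-1))) (by positivity)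
    refine blowup hs h0 hC hE hx hx2 (by positivity) ?_
    have h1 := Real.rpow_lt_rpow (by positivity) hb (show 0 < (s-1)/4 by positivity)
    rw [Real.mul_rpow (by positivity) (by positivity), ← Real.rpow_mul (by positivity),
      ← Real.rpow_mul (by positivity), show 4 / (s-1) * ((s-1)/4) = 1 by field_simp,
      show -(4 / (s-1)) * ((s-1)/4) = -1 by field_simp, Real.rpow_one, Real.rpow_neg_one,
      ← div_eq_mul_inv, div_lt_iff₀ hx] at h1
    exact h1
  choose W r hr hW h1 using key
  refine no_seq hm hs hs2 W r ?_ hW h1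
  refine tendsto_atTop_mono hr ?_
  exact tendsto_atTop_add_const_right _ _ tendsto_natCast_atTop_atTop

end Bih

/-- universal upper bound, with a constant depending only on
`n`, `p` and `s`, for nonnegative solutions on the punctured unit ball:
`|U(x)| ≤ C |x|^{-4/(s-1)}` for `0 < |x| < 1/2`. -/
theorem statement16 (n p : ℕ) (hn : 5 ≤ n) (hp : 1 ≤ p) (s : ℝ)
    (hs1 : 1 < s) (hs2 : s < ((n : ℝ) + 4) / ((n : ℝ) - 4)) :
    ∃ C > (0 : ℝ),
      ∀ U : Fin p → EuclideanSpace ℝ (Fin n) → ℝ,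
        (∀ i, ∀ x ∈ Metric.ball (0 : EuclideanSpace ℝ (Fin n)) 1 \ {0}, 0 ≤ U i x) →
        (∀ i, ContDiffOn ℝ 4 (U i)
          (Metric.ball (0 : EuclideanSpace ℝ (Fin n)) 1 \ {0})) →
        (∀ i, ∀ x ∈ Metric.ball (0 : EuclideanSpace ℝ (Fin n)) 1 \ {0},
          bilap (U i) x = (vnorm U x) ^ (s - 1) * U i x) →
        ∀ x : EuclideanSpace ℝ (Fin n), 0 < ‖x‖ → ‖x‖ < 1 / 2 →
          vnorm U x ≤ C * ‖x‖ ^ (-(4 / (s - 1))) := by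
  obtain ⟨m, rfl⟩ : ∃ m, n = m + 4 := ⟨n - 4, by omega⟩
  have hm : 1 ≤ m := by omega
  have hm' : (0:ℝ) < m := by exact_mod_cast hm
  refine Bih.main m p hm hs1 ?_
  push_cast at hs2
  rw [lt_div_iff₀ (by linarith)] at hs2
  linarith
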